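/- There exists η₀ ∈ (0,1] such that the following holds for all η ∈ (0,η₀]: if w ∈ S¹, (L_k = x_k + ℝe_k)_{k≥1} are lines in ℝ² with e_k ∈ C(w,η) and ((x_k,e_k))_{k≥1} dense in ℝ² × C(w,η), ρ_k > 0, and E := ⋂_{n≥1} ⋃_{k≥n} B(L_k,ρ_k), then there is a compact universal differentiability set D ⊆ E ∩ [0,1]². -/

import Mathlib

/-!
The proof is a perturbed maximisation of directional derivatives.

In coordinates adapted to `w`, the lines become graphs `y = α + m a` of slope `|m| < m0`, and a
Lipschitz function `F` on `ℝ × ℝ` is studied through its derivatives `Trip F z m s` in the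
directions `(1, m)`. By Baire category (`baire_lines`) the pairs `(m, α)` whose line lies, near the
origin, in the given `G_δ` set are dense among those with `|m| < m0`. From countably many of them
`exists_nest` builds an increasing family of closed sets `M l = nest ℓ N w l`, `0 ≤ l ≤ 1`, inside
the `G_δ` set, such that for `l < l'` every sufficiently short segment near a point of `M l` is
approximated, to an error small relative to its length, by segments contained in `M l'`
(`Wide`, `nest_wide`). The compact set is `M 1`.

Given `F`, the variational principle `VP.Good.variational` starts with one directional derivative
and repeatedly replaces `(z, m, s)` by an admissible triple nearby whose penalised derivative
`s - q m` is almost maximal, adding each time a small quadratic penalty in the slope. A triple is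
admissible only if its increments at the scales fixed so far are controlled, which makes the limit
`s` an actual directional derivative at the limit point `x`. The outcome (`VP.Extremal`) is that
near `x`, in a level slightly larger than that of `x`, no directional derivative exceeds
`s + g μ + A μ²` at slope `m + μ` by an amount `D ≥ ε` while having all increments in the direction
`(1, m)` within `K √D |t|` of those at `x`.

Such an extremal point is a point of differentiability (`VP.Extremal.differentiableAt`). If the
affine map with slope `s` along `(1, m)` and `g` across failed to approximate `F` at some small
displacement, one would join a point close to the displaced one to the line of slope `m` through `x`
by two almost straight segments, which `Wide` provides inside a larger level. Along this curve the
approximation error is a one-variable Lipschitz function, almost zero at the ends and large inside.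
A weak-type `(1,1)` estimate (`weak_type`, `layer_bound`) gives a point of the curve where this error
has a derivative `σ` bounded below which dominates the squares of all its difference quotients
(`mean_value`). There the curve has a direction whose derivative of `F` beats the extremal one by a
multiple of `σ`, with increments controlled by `√σ` (`graph_control`), which contradicts extremality.
-/

open MeasureTheory Filter Metric Set Topology RealInnerProductSpace

noncomputable section

/-- The Euclidean plane. -/
abbrev E2 := EuclideanSpace ℝ (Fin 2)

/-- The cone `C(w,α) = {v ∈ S¹ : ⟨v,w⟩ ≥ 1 − α}`. -/
def cone (w : E2) (α : ℝ) : Set E2 :=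
  {v ∈ sphere (0:E2) 1 | 1 - α ≤ ⟪v, w⟫}

/-- The line `x + ℝe`. -/
def line (x e : E2) : Set E2 := {y | ∃ t : ℝ, y = x + t • e}

/-- `E ⊆ ℝ²` is a universal differentiability set if every (real-valued) Lipschitz function
on `ℝ²` has a point of differentiability in `E`. -/
def IsUDS (E : Set E2) : Prop :=
  ∀ f : E2 → ℝ, (∃ K, LipschitzWith K f) → ∃ x ∈ E, DifferentiableAt ℝ f x

/-- The unit square `[0,1]²`. -/
def unitSquare : Set E2 := {x | ∀ i, x i ∈ Set.Icc (0:ℝ) 1}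

/-! ### One-dimensional estimates for Lipschitz functions -/

lemma lipWith_of {G : ℝ → ℝ} {C : ℝ} (hC : 0 ≤ C) (hG : ∀ a b, |G a - G b| ≤ C * |a - b|) :
    LipschitzWith C.toNNReal G := by
  refine LipschitzWith.of_dist_le_mul fun a b => ?_
  rw [Real.dist_eq, Real.dist_eq, Real.coe_toNNReal _ hC]
  exact hG a b

lemma lip_abs_deriv_le {G : ℝ → ℝ} {C : ℝ} (hC : 0 ≤ C) (hG : ∀ a b, |G a - G b| ≤ C * |a - b|)
    (a : ℝ) : |deriv G a| ≤ C := by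
  have := norm_deriv_le_of_lipschitz (lipWith_of hC hG) (x₀ := a)
  rwa [Real.norm_eq_abs, Real.coe_toNNReal _ hC] at this

lemma lip_integral_deriv {G : ℝ → ℝ} {C : ℝ} (hC : 0 ≤ C) (hG : ∀ a b, |G a - G b| ≤ C * |a - b|)
    (a b : ℝ) : ∫ t in a..b, deriv G t = G b - G a :=
  ((lipWith_of hC hG).lipschitzOnWith (s := uIcc a b)).absolutelyContinuousOnInterval.integral_deriv_eq_sub

lemma lip_enorm_sub_le {G : ℝ → ℝ} {C : ℝ} (hC : 0 ≤ C)
    (hG : ∀ a b, |G a - G b| ≤ C * |a - b|)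
    (a b : ℝ) : ENNReal.ofReal |G b - G a| ≤ ∫⁻ t in uIoc a b, ‖deriv G t‖ₑ := by
  rw [← lip_integral_deriv hC hG a b, ← Real.norm_eq_abs, intervalIntegral.norm_integral_eq_norm_integral_uIoc,
    ofReal_norm]
  exact enorm_integral_le_lintegral_enorm _

/-- Weak type `(1,1)` bound for the one-sided difference quotients of a Lipschitz function inside
`[-R, R]`, obtained from the Vitali covering lemma. -/
lemma weak_type {G : ℝ → ℝ} {C : ℝ} (hC : 0 ≤ C) (hG : ∀ a b, |G a - G b| ≤ C * |a - b|)
    {R l : ℝ} (hl : 0 < l) :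
    volume {a | a ∈ Icc (-R) R ∧ ∃ b ∈ Icc (-R) R, l * |b - a| < |G b - G a|} ≤
      ENNReal.ofReal (10 / l) * ∫⁻ t in Icc (-R) R, ‖deriv G t‖ₑ := by
  set Bad := {a | a ∈ Icc (-R) R ∧ ∃ b ∈ Icc (-R) R, l * |b - a| < |G b - G a|} with hBad
  have hch : ∀ a : ℝ, ∃ b, a ∈ Bad → b ∈ Icc (-R) R ∧ l * |b - a| < |G b - G a| := by
    intro a
    by_cases ha : a ∈ Bad
    · obtain ⟨b, hb⟩ := ha.2
      exact ⟨b, fun _ => hb⟩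
    · exact ⟨0, fun h => absurd h ha⟩
  choose B hB using hch
  have hne : ∀ a ∈ Bad, 0 < |B a - a| := by
    intro a ha
    have h := (hB a ha).2
    rcases eq_or_lt_of_le (abs_nonneg (B a - a)) with h0 | h0
    · have : B a = a := by
        have := abs_eq_zero.1 h0.symm
        linarith
      rw [this] at h
      simp at h
    · exact h0
  obtain ⟨u, huB, hudis, hucov⟩ := Vitali.exists_disjoint_subfamily_covering_enlargement_closedBall
    Bad (fun a : ℝ => a) (fun a => |B a - a|) (2 * R) (by
      intro a ha
      have h1 := ha.1
      have h2 := (hB a ha).1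
      rw [abs_le]
      constructor <;> linarith [h1.1, h1.2, h2.1, h2.2]) 5 (by norm_num)
  have hucount : u.Countable := by
    refine hudis.countable_of_nonempty_interior fun a ha => ?_
    exact (nonempty_ball.2 (hne a (huB ha))).mono ball_subset_interior_closedBall
  have hsub : Bad ⊆ ⋃ a ∈ u, closedBall a (5 * |B a - a|) := by
    intro a ha
    obtain ⟨b, hb, hab⟩ := hucov a ha
    simp only [mem_iUnion]
    exact ⟨b, hb, hab (mem_closedBall_self (abs_nonneg _))⟩
  have hJ : ∀ a ∈ Bad, uIoc a (B a) ⊆ closedBall a |B a - a| := by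
    intro a ha t ht
    rw [mem_closedBall, Real.dist_eq]
    rcases le_total a (B a) with h | h
    · rw [uIoc_of_le h] at ht
      rw [abs_of_nonneg (by linarith [ht.1]), abs_of_nonneg (by linarith)]
      linarith [ht.2]
    · rw [uIoc_of_ge h] at ht
      rw [abs_of_nonpos (by linarith [ht.2]), abs_of_nonpos (by linarith)]
      linarith [ht.1]
  have hJ2 : ∀ a ∈ Bad, uIoc a (B a) ⊆ Icc (-R) R := by
    intro a ha t ht
    have h1 := ha.1
    have h2 := (hB a ha).1
    rcases le_total a (B a) with h | h
    · rw [uIoc_of_le h] at ht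
      exact ⟨by linarith [ht.1, h1.1], by linarith [ht.2, h2.2]⟩
    · rw [uIoc_of_ge h] at ht
      exact ⟨by linarith [ht.1, h2.1], by linarith [ht.2, h1.2]⟩
  calc volume Bad ≤ volume (⋃ a ∈ u, closedBall a (5 * |B a - a|)) := measure_mono hsub
    _ ≤ ∑' a : u, volume (closedBall (a : ℝ) (5 * |B a - a|)) :=
        measure_biUnion_le volume hucount _
    _ ≤ ∑' a : u, ENNReal.ofReal (10 / l) * ∫⁻ t in uIoc (a : ℝ) (B a), ‖deriv G t‖ₑ := by
        refine ENNReal.tsum_le_tsum fun a => ?_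
        have ha := huB a.2
        rw [Real.volume_closedBall]
        calc ENNReal.ofReal (2 * (5 * |B a - a|))
            ≤ ENNReal.ofReal (10 / l * |G (B a) - G a|) := by
              apply ENNReal.ofReal_le_ofReal
              have := (hB a ha).2
              rw [div_mul_eq_mul_div, le_div_iff₀ hl]
              nlinarith
          _ = ENNReal.ofReal (10 / l) * ENNReal.ofReal |G (B a) - G a| :=
              ENNReal.ofReal_mul (by positivity)
          _ ≤ _ := by gcongr; exact lip_enorm_sub_le hC hG _ _
    _ = ENNReal.ofReal (10 / l) * ∑' a : u, ∫⁻ t in uIoc (a : ℝ) (B a), ‖deriv G t‖ₑ :=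
        ENNReal.tsum_mul_left
    _ = ENNReal.ofReal (10 / l) * ∫⁻ t in ⋃ a ∈ u, uIoc (a : ℝ) (B a), ‖deriv G t‖ₑ := by
        rw [lintegral_biUnion hucount (fun i _ => measurableSet_uIoc)]
        intro a ha b hb hab
        exact (hudis ha hb hab).mono (hJ a (huB ha)) (hJ b (huB hb))
    _ ≤ _ := by
        gcongr
        exact iUnion₂_subset fun a ha => hJ2 a (huB ha)

/-- Layer cake estimate: if at almost every point of `Y ⊆ [-R, R]` with positive derivative the
difference quotients of `G` exceed `K √(G')`, then `∫_Y G'⁺` is small. -/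
lemma layer_bound {G : ℝ → ℝ} {C : ℝ} (hC : 0 < C) (hG : ∀ a b, |G a - G b| ≤ C * |a - b|)
    {R K : ℝ} (hK : 0 < K) {Y N : Set ℝ} (hYR : Y ⊆ Icc (-R) R)
    (hN : volume N = 0)
    (hbad : ∀ a ∈ Y, a ∉ N → ∃ b ∈ Icc (-R) R, K * √(deriv G a) * |b - a| < |G b - G a|) :
    ∫⁻ a in Y, ENNReal.ofReal (max (deriv G a) 0) ≤
      ENNReal.ofReal (20 * √C / K) * ∫⁻ t in Icc (-R) R, ‖deriv G t‖ₑ := by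
  set V := ∫⁻ t in Icc (-R) R, ‖deriv G t‖ₑ with hV
  have hm : Measurable fun a => √(max (deriv G a) 0) :=
    ((measurable_deriv G).max measurable_const).sqrt
  have h1 : ∫⁻ a in Y, ENNReal.ofReal (max (deriv G a) 0) =
      ∫⁻ a in Y, ENNReal.ofReal (√(max (deriv G a) 0) ^ (2:ℝ)) := by
    refine lintegral_congr fun a => ?_
    rw [Real.rpow_two, Real.sq_sqrt (le_max_right _ _)]
  rw [h1, lintegral_rpow_eq_lintegral_meas_lt_mul _ (Eventually.of_forall fun a => Real.sqrt_nonneg _)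
    hm.aemeasurable (by norm_num)]
  have h2 : ∀ t ∈ Ioi (0:ℝ), (volume.restrict Y) {a | t < √(max (deriv G a) 0)} *
      ENNReal.ofReal (t ^ ((2:ℝ) - 1)) ≤
      (Ioc 0 √C).indicator (fun _ => ENNReal.ofReal (10 / K) * V) t := by
    intro t ht
    have ht' : (0:ℝ) < t := ht
    have e1 : t ^ ((2:ℝ) - 1) = t := by norm_num
    rw [e1, Measure.restrict_apply (measurableSet_lt measurable_const hm)]
    by_cases htC : t ≤ √C
    · rw [indicator_of_mem (show t ∈ Ioc 0 √C from ⟨ht, htC⟩)]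
      have hsub : {a | t < √(max (deriv G a) 0)} ∩ Y ⊆
          {a | a ∈ Icc (-R) R ∧ ∃ b ∈ Icc (-R) R, (K * t) * |b - a| < |G b - G a|} ∪ N := by
        rintro a ⟨ha1, ha2⟩
        by_cases haN : a ∈ N
        · exact Or.inr haN
        left
        refine ⟨hYR ha2, ?_⟩
        obtain ⟨b, hb, hb'⟩ := hbad a ha2 haN
        refine ⟨b, hb, lt_of_le_of_lt ?_ hb'⟩
        have hle : t ≤ √(deriv G a) := by
          rcases le_total (deriv G a) 0 with h | h
          · simp only [mem_ofPred_eq, max_eq_right h, Real.sqrt_zero] at ha1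
            linarith
          · simp only [mem_ofPred_eq, max_eq_left h] at ha1
            exact ha1.le
        gcongr
      calc volume ({a | t < √(max (deriv G a) 0)} ∩ Y) * ENNReal.ofReal t
          ≤ (ENNReal.ofReal (10 / (K * t)) * V) * ENNReal.ofReal t := by
            gcongr
            refine (measure_mono hsub).trans ((measure_union_le _ _).trans ?_)
            rw [hN, add_zero]
            exact weak_type hC.le hG (by positivity)
        _ = (ENNReal.ofReal (10 / (K * t)) * ENNReal.ofReal t) * V := by ring
        _ = ENNReal.ofReal (10 / K) * V := by
            rw [← ENNReal.ofReal_mul (by positivity)]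
            congr 2
            field_simp
    · have : {a | t < √(max (deriv G a) 0)} = ∅ := by
        ext a
        simp only [mem_ofPred_eq, mem_empty_iff_false, iff_false, not_lt]
        refine le_trans (Real.sqrt_le_sqrt ?_) (not_le.1 htC).le
        exact max_le ((le_abs_self _).trans (lip_abs_deriv_le hC.le hG a)) hC.le
      rw [this]
      simp
  calc ENNReal.ofReal 2 * ∫⁻ t in Ioi 0, (volume.restrict Y) {a | t < √(max (deriv G a) 0)} *
      ENNReal.ofReal (t ^ ((2:ℝ) - 1))
      ≤ ENNReal.ofReal 2 * ∫⁻ t in Ioi 0,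
        (Ioc 0 √C).indicator (fun _ => ENNReal.ofReal (10 / K) * V) t := by
        exact mul_le_mul' le_rfl (setLIntegral_mono' measurableSet_Ioi h2)
    _ ≤ ENNReal.ofReal 2 * ((ENNReal.ofReal (10 / K) * V) * ENNReal.ofReal √C) := by
        refine mul_le_mul' le_rfl ?_
        refine (setLIntegral_le_lintegral _ _).trans ?_
        rw [lintegral_indicator measurableSet_Ioc, setLIntegral_const, Real.volume_Ioc, sub_zero]
    _ = (ENNReal.ofReal 2 * ENNReal.ofReal (10 / K) * ENNReal.ofReal √C) * V := by ring
    _ = _ := by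
        rw [← ENNReal.ofReal_mul (by positivity), ← ENNReal.ofReal_mul (by positivity)]
        congr 2
        field_simp
        norm_num

/-- If a Lipschitz function is nearly zero at `±R` and large at `ξ`, then at some point,
outside a given null set and not too close to `±R`, its derivative `σ` is not small and dominates
the squares of all difference quotients up to a constant. -/
lemma mean_value {G : ℝ → ℝ} {C : ℝ} (hC : 0 < C) (hG : ∀ a b, |G a - G b| ≤ C * |a - b|)
    {R h ξ : ℝ} (hR : 0 < R) (hh : 0 < h) (hξ : |ξ| ≤ R) (hGR : |G R| ≤ h / 8)
    (hGR' : |G (-R)| ≤ h / 8) (hGξ : h ≤ |G ξ|) {N : Set ℝ} (hN : volume N = 0) :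
    ∃ τ σ, τ ∉ N ∧ |τ| ≤ R - h / (16 * C) ∧ HasDerivAt G σ τ ∧ h / (16 * R) ≤ σ ∧
      ∀ b, |b| ≤ R → |G b - G τ| ≤ 120 * √C * √σ * |b - τ| := by
  by_contra! H
  set I := Icc (-R) R with hI
  set f := deriv G with hf
  set d := h / (16 * C) with hd
  have hd0 : 0 < d := by positivity
  have hfm : Measurable f := measurable_deriv G
  have hfb : ∀ t, |f t| ≤ C := lip_abs_deriv_le hC.le hG
  have hpm : Measurable fun t => max (f t) 0 := hfm.max measurable_const
  have hpb : ∀ t, max (f t) 0 ≤ C := fun t => max_le ((le_abs_self _).trans (hfb t)) hC.le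
  have hp0 : ∀ t, 0 ≤ max (f t) 0 := fun t => le_max_right _ _
  have hvol : volume I ≠ ⊤ := by rw [hI, Real.volume_Icc]; exact ENNReal.ofReal_ne_top
  have hIntOn : ∀ (g : ℝ → ℝ) (B : ℝ), Measurable g → (∀ t, |g t| ≤ B) → IntegrableOn g I := by
    intro g B hg hB
    exact Measure.integrableOn_of_bounded hvol hg.aestronglyMeasurable
      (Eventually.of_forall fun t => by rw [Real.norm_eq_abs]; exact hB t)
  have hfi : IntegrableOn f I := hIntOn f C hfm hfb
  have hpi : IntegrableOn (fun t => max (f t) 0) I :=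
    hIntOn _ C hpm fun t => by rw [abs_of_nonneg (hp0 t)]; exact hpb t
  set A := ∫ t in I, max (f t) 0 with hA
  have hξ' := abs_le.1 hξ
  have key : ∀ a b, a ∈ I → b ∈ I → a ≤ b → G b - G a ≤ A := by
    intro a b ha hb hab
    rw [← lip_integral_deriv hC.le hG a b, intervalIntegral.integral_of_le hab]
    have hs : Ioc a b ⊆ I := fun t ht => ⟨by linarith [ht.1, ha.1], by linarith [ht.2, hb.2]⟩
    calc ∫ t in Ioc a b, f t ≤ ∫ t in Ioc a b, max (f t) 0 :=
          setIntegral_mono (hfi.mono_set hs) (hpi.mono_set hs) fun t => le_max_left _ _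
      _ ≤ A := setIntegral_mono_set hpi (Eventually.of_forall hp0) hs.eventuallyLE
  have hGR1 := abs_le.1 hGR
  have hGR2 := abs_le.1 hGR'
  have hRI : R ∈ I := ⟨by linarith, le_rfl⟩
  have hRI' : -R ∈ I := ⟨le_rfl, by linarith⟩
  have hξI : ξ ∈ I := hξ'
  have hA78 : 7 * h / 8 ≤ A := by
    rcases le_abs.1 hGξ with h1 | h1
    · have := key (-R) ξ hRI' hξI hξ'.1
      linarith
    · have := key ξ R hξI hRI hξ'.2
      linarith
  have hA0 : 0 < A := by linarith
  have hfI : ∫ t in I, f t = G R - G (-R) := by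
    rw [← lip_integral_deriv hC.le hG (-R) R, intervalIntegral.integral_of_le (by linarith),
      hI, integral_Icc_eq_integral_Ioc]
  have hV : ∫⁻ t in I, ‖f t‖ₑ ≤ ENNReal.ofReal (3 * A) := by
    rw [← ofReal_integral_norm_eq_lintegral_enorm hfi]
    apply ENNReal.ofReal_le_ofReal
    have e : ∀ t, ‖f t‖ = 2 * max (f t) 0 - f t := by
      intro t
      rw [Real.norm_eq_abs]
      rcases le_total (f t) 0 with h | h
      · rw [max_eq_right h, abs_of_nonpos h]; ring
      · rw [max_eq_left h, abs_of_nonneg h]; ring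
    simp_rw [e]
    rw [integral_sub (hpi.const_mul 2) hfi, integral_const_mul, hfI]
    linarith
  set Y := Icc (-R + d) (R - d) ∩ {t | h / (16 * R) ≤ f t} with hYdef
  have hYm : MeasurableSet Y := measurableSet_Icc.inter (measurableSet_le measurable_const hfm)
  have hYI : Y ⊆ I := fun t ht => ⟨by linarith [ht.1.1], by linarith [ht.1.2]⟩
  set N' := N ∪ {t | ¬ DifferentiableAt ℝ G t} with hN'
  have hN'0 : volume N' = 0 := by
    refine measure_union_null hN ?_
    exact ae_iff.1 (lipWith_of hC.le hG).ae_differentiableAt_real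
  have hYbig : A - h / 4 ≤ ∫ t in Y, max (f t) 0 := by
    have hpt : ∀ t ∈ I, max (f t) 0 ≤ ((Y.indicator (fun t => max (f t) 0) t + h / (16 * R)) +
        (Iic (-R + d)).indicator (fun _ => C) t) + (Ici (R - d)).indicator (fun _ => C) t := by
      intro t ht
      have n1 : 0 ≤ Y.indicator (fun t => max (f t) 0) t := indicator_nonneg (fun t _ => hp0 t) t
      have n2 : 0 ≤ (Iic (-R + d)).indicator (fun _ => C) t :=
        indicator_nonneg (fun t _ => hC.le) t
      have n3 : 0 ≤ (Ici (R - d)).indicator (fun _ => C) t :=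
        indicator_nonneg (fun t _ => hC.le) t
      have n4 : 0 ≤ h / (16 * R) := by positivity
      by_cases c1 : t ≤ -R + d
      · rw [indicator_of_mem (show t ∈ Iic (-R + d) from c1)]
        linarith [hpb t]
      by_cases c2 : R - d ≤ t
      · rw [indicator_of_mem (show t ∈ Ici (R - d) from c2)]
        linarith [hpb t]
      by_cases c3 : h / (16 * R) ≤ f t
      · have : t ∈ Y := ⟨⟨by linarith, by linarith⟩, c3⟩
        rw [indicator_of_mem this]
        linarith
      · have : max (f t) 0 ≤ h / (16 * R) := max_le (by linarith) n4
        linarith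
    have i1 : IntegrableOn (Y.indicator (fun t => max (f t) 0)) I := hpi.indicator hYm
    have i2 : IntegrableOn (fun _ : ℝ => h / (16 * R)) I := integrableOn_const hvol
    have i3 : IntegrableOn ((Iic (-R + d)).indicator (fun _ => C)) I :=
      Integrable.indicator (integrableOn_const hvol) measurableSet_Iic
    have i4 : IntegrableOn ((Ici (R - d)).indicator (fun _ => C)) I :=
      Integrable.indicator (integrableOn_const hvol) measurableSet_Ici
    have hle := setIntegral_mono_on hpi (((i1.add i2).add i3).add i4) measurableSet_Icc hpt
    have e1 : ∫ t in I, Y.indicator (fun t => max (f t) 0) t = ∫ t in Y, max (f t) 0 := by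
      rw [setIntegral_indicator hYm, inter_eq_right.2 hYI]
    have e2 : ∫ t in I, h / (16 * R) = h / 8 := by
      rw [setIntegral_const, hI, Real.volume_real_Icc_of_le (by linarith), smul_eq_mul]
      field_simp
      ring
    have e3 : ∫ t in I, (Iic (-R + d)).indicator (fun _ => C) t ≤ h / 16 := by
      rw [setIntegral_indicator measurableSet_Iic, setIntegral_const, smul_eq_mul]
      have : volume.real (I ∩ Iic (-R + d)) ≤ d := by
        calc volume.real (I ∩ Iic (-R + d)) ≤ volume.real (Icc (-R) (-R + d)) :=
              measureReal_mono (fun t ht => ⟨ht.1.1, ht.2⟩)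
                (by rw [Real.volume_Icc]; exact ENNReal.ofReal_ne_top)
          _ = d := by rw [Real.volume_real_Icc_of_le (by linarith)]; ring
      calc _ ≤ d * C := by gcongr
        _ = h / 16 := by rw [hd]; field_simp
    have e4 : ∫ t in I, (Ici (R - d)).indicator (fun _ => C) t ≤ h / 16 := by
      rw [setIntegral_indicator measurableSet_Ici, setIntegral_const, smul_eq_mul]
      have : volume.real (I ∩ Ici (R - d)) ≤ d := by
        calc volume.real (I ∩ Ici (R - d)) ≤ volume.real (Icc (R - d) R) :=
              measureReal_mono (fun t ht => ⟨ht.2, ht.1.2⟩)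
                (by rw [Real.volume_Icc]; exact ENNReal.ofReal_ne_top)
          _ = d := by rw [Real.volume_real_Icc_of_le (by linarith)]; ring
      calc _ ≤ d * C := by gcongr
        _ = h / 16 := by rw [hd]; field_simp
    simp only [Pi.add_apply] at hle
    have s1 := integral_add i1 i2
    have s2 := integral_add (i1.add i2) i3
    have s3 := integral_add ((i1.add i2).add i3) i4
    simp only [Pi.add_apply] at s1 s2 s3
    rw [s3, s2, s1, e1, e2] at hle
    linarith
  have hbad : ∀ a ∈ Y, a ∉ N' →
      ∃ b ∈ Icc (-R) R, (120 * √C) * √(deriv G a) * |b - a| < |G b - G a| := by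
    intro a ha haN
    rw [hN', mem_union, not_or] at haN
    have hdiff : DifferentiableAt ℝ G a := by
      by_contra hc
      exact haN.2 hc
    obtain ⟨b, hb, hb'⟩ := H a (deriv G a) haN.1 (abs_le.2 ⟨by linarith [ha.1.1], ha.1.2⟩)
      hdiff.hasDerivAt ha.2
    exact ⟨b, abs_le.1 hb, hb'⟩
  have hlb := layer_bound hC hG (R := R) (K := 120 * √C) (by positivity) hYI hN'0 hbad
  have h3 : ENNReal.ofReal (∫ t in Y, max (f t) 0) ≤ ENNReal.ofReal (A / 2) := by
    rw [ofReal_integral_eq_lintegral_ofReal (hpi.mono_set hYI) (Eventually.of_forall hp0)]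
    refine hlb.trans ?_
    calc ENNReal.ofReal (20 * √C / (120 * √C)) * ∫⁻ t in I, ‖f t‖ₑ
        ≤ ENNReal.ofReal (20 * √C / (120 * √C)) * ENNReal.ofReal (3 * A) := by gcongr
      _ = ENNReal.ofReal (A / 2) := by
        rw [← ENNReal.ofReal_mul (by positivity)]
        congr 1
        have : √C ≠ 0 := (Real.sqrt_pos.2 hC).ne'
        field_simp
        norm_num
  have h4 := (ENNReal.ofReal_le_ofReal_iff (by positivity)).1 h3
  linarith

/-! ### Increments along graphs of slope `m` -/

/-- The increment of `F` from `z` along the direction `(1, m)`. -/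
def incr (F : ℝ × ℝ → ℝ) (z : ℝ × ℝ) (m t : ℝ) : ℝ := F (z.1 + t, z.2 + m * t) - F z

/-- `s` is the derivative of `F` at `z` in the direction `(1, m)`. -/
def Trip (F : ℝ × ℝ → ℝ) (z : ℝ × ℝ) (m s : ℝ) : Prop := HasDerivAt (fun t => incr F z m t) s 0

section incr

variable {F : ℝ × ℝ → ℝ} {L : ℝ}

lemma incr_zero (z : ℝ × ℝ) (m : ℝ) : incr F z m 0 = 0 := by simp [incr]

lemma F_lip_sub (hF : ∀ p q : ℝ × ℝ, |F p - F q| ≤ L * dist p q) (hL : 0 ≤ L)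
    {a b c d B : ℝ} (h1 : |a - c| ≤ B) (h2 : |b - d| ≤ B) :
    |F (a, b) - F (c, d)| ≤ L * B := by
  refine (hF _ _).trans ?_
  gcongr
  rw [Prod.dist_eq, Real.dist_eq, Real.dist_eq]
  exact max_le h1 h2

lemma incr_slope (hF : ∀ p q : ℝ × ℝ, |F p - F q| ≤ L * dist p q) (hL : 0 ≤ L)
    (z : ℝ × ℝ) (m m' t : ℝ) : |incr F z m t - incr F z m' t| ≤ L * |m - m'| * |t| := by
  have : incr F z m t - incr F z m' t = F (z.1 + t, z.2 + m * t) - F (z.1 + t, z.2 + m' * t) := by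
    simp only [incr]; ring
  rw [this, mul_assoc]
  refine F_lip_sub hF hL ?_ ?_
  · simp only [sub_self, abs_zero]; positivity
  · rw [← abs_mul]; apply le_of_eq; congr 1; ring

lemma incr_le (hF : ∀ p q : ℝ × ℝ, |F p - F q| ≤ L * dist p q) (hL : 0 ≤ L)
    (z : ℝ × ℝ) {m : ℝ} (hm : |m| ≤ 1) (t : ℝ) : |incr F z m t| ≤ L * |t| := by
  simp only [incr]
  refine F_lip_sub hF hL (c := z.1) (d := z.2) ?_ ?_
  · simp
  · rw [add_sub_cancel_left, abs_mul]
    nlinarith [abs_nonneg t]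

lemma incr_base (hF : ∀ p q : ℝ × ℝ, |F p - F q| ≤ L * dist p q) (hL : 0 ≤ L)
    (z z' : ℝ × ℝ) (m t : ℝ) : |incr F z m t - incr F z' m t| ≤ 2 * L * dist z z' := by
  have e : incr F z m t - incr F z' m t =
      (F (z.1 + t, z.2 + m * t) - F (z'.1 + t, z'.2 + m * t)) - (F z - F z') := by
    simp only [incr]; ring
  have h1 : |F (z.1 + t, z.2 + m * t) - F (z'.1 + t, z'.2 + m * t)| ≤ L * dist z z' := by
    refine F_lip_sub hF hL ?_ ?_
    · rw [add_sub_add_right_eq_sub, ← Real.dist_eq, Prod.dist_eq]; exact le_max_left _ _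
    · rw [add_sub_add_right_eq_sub, ← Real.dist_eq, Prod.dist_eq]; exact le_max_right _ _
  rw [e]
  calc _ ≤ |F (z.1 + t, z.2 + m * t) - F (z'.1 + t, z'.2 + m * t)| + |F z - F z'| := abs_sub _ _
    _ ≤ _ := by linarith [hF z z']

lemma trip_control {z : ℝ × ℝ} {m s : ℝ} (h : Trip F z m s) {ε : ℝ} (hε : 0 < ε) :
    ∃ r > 0, ∀ t, |t| ≤ r → |incr F z m t - s * t| ≤ ε * |t| := by
  have h1 := (hasDerivAt_iff_isLittleO.1 h).def hε
  obtain ⟨r, hr, hb⟩ := Metric.eventually_nhds_iff.1 h1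
  refine ⟨r / 2, by positivity, fun t ht => ?_⟩
  have := hb (y := t) (by rw [Real.dist_eq, sub_zero]; linarith)
  simpa [incr_zero, mul_comm] using this

lemma trip_of_control {z : ℝ × ℝ} {m s : ℝ}
    (h : ∀ ε > 0, ∃ r > 0, ∀ t, |t| ≤ r → |incr F z m t - s * t| ≤ ε * |t|) : Trip F z m s := by
  refine hasDerivAt_iff_isLittleO.2 (Asymptotics.IsLittleO.of_bound fun ε hε => ?_)
  obtain ⟨r, hr, hb⟩ := h ε hε
  refine Metric.eventually_nhds_iff.2 ⟨r, hr, fun t ht => ?_⟩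
  rw [Real.dist_eq, sub_zero] at ht
  simpa [incr_zero, mul_comm] using hb t ht.le

lemma trip_le (hF : ∀ p q : ℝ × ℝ, |F p - F q| ≤ L * dist p q) (hL : 0 ≤ L)
    {z : ℝ × ℝ} {m s : ℝ} (hm : |m| ≤ 1) (h : Trip F z m s) : |s| ≤ L := by
  refine le_of_forall_pos_le_add fun ε hε => ?_
  obtain ⟨r, hr, hb⟩ := trip_control h hε
  have h1 := hb r (abs_of_pos hr).le
  have h2 := incr_le hF hL z hm r
  have h3 : |s * r| ≤ |incr F z m r| + |incr F z m r - s * r| := by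
    have := abs_sub (incr F z m r) (incr F z m r - s * r)
    rwa [sub_sub_cancel] at this
  rw [abs_mul] at h3
  rw [abs_of_pos hr] at *
  have h4 : |s| * r ≤ (L + ε) * r := by linarith
  exact le_of_mul_le_mul_right h4 hr

end incr

/-! ### The variational principle -/

/-- Data of the perturbed maximisation: a function `F`, an increasing family of sets `M`, a
Lipschitz constant `L` of `F`, a bound `m0` for slopes, the size `β0` of the first quadratic
penalty, and the initial tolerance `Λ`. -/
structure VP where
  F : ℝ × ℝ → ℝ
  M : ℝ → Set (ℝ × ℝ)
  L : ℝ
  m0 : ℝ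
  β0 : ℝ
  Λ : ℝ

namespace VP

variable (p : VP)

/-- Gain still available at stage `n`. -/
def η (n : ℕ) : ℝ := (2 * p.L + 1) * (1 / 64) ^ n
/-- Weight of the quadratic penalty added at stage `n`. -/
def β (n : ℕ) : ℝ := p.β0 * (1 / 4) ^ n
/-- Bound for the change of slope after stage `0`. -/
def d0 : ℝ := √((2 * p.L + 1) / p.β0)
/-- Bound for the change of slope after stage `n`. -/
def d (n : ℕ) : ℝ := p.d0 * (1 / 4) ^ n
/-- Tolerance for the linear approximation at stage `n`. -/
def tol (n : ℕ) : ℝ := p.Λ * (1 / 2) ^ n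
/-- Total weight of the penalties. -/
def A : ℝ := 4 / 3 * p.β0

/-- Standing assumptions. -/
structure Good : Prop where
  L_pos : 0 < p.L
  lip : ∀ a b : ℝ × ℝ, |p.F a - p.F b| ≤ p.L * dist a b
  mono : Monotone p.M
  closed : ∀ l, IsClosed (p.M l)
  m0_pos : 0 < p.m0
  m0_le : p.m0 ≤ 1
  β0_pos : 0 < p.β0
  Λ_big : 2 * ((5 * p.L + 8 * p.A) * p.d0 + (2 * p.L + 1)) + 2 * p.L < p.Λ

/-- A stage of the construction: a point `z`, slope `m` and slope derivative `s`, a scale `r`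
for the linear approximation, a radius `δ`, levels `l < t`, and the accumulated penalty `q`. -/
structure St where
  z : ℝ × ℝ
  m : ℝ
  s : ℝ
  r : ℝ
  δ : ℝ
  l : ℝ
  t : ℝ
  q : ℝ → ℝ

/-- Candidates `(z, m, s)` for the stages after stage `n`. -/
structure Cand (n : ℕ) (S : St) (z : ℝ × ℝ) (m s : ℝ) : Prop where
  level : ∃ l < S.t, z ∈ p.M l
  slope : |m| ≤ p.m0
  trip : Trip p.F z m s
  near : dist z S.z < S.δ
  ctrl : ∀ t, t ≠ 0 → |t| ≤ S.r → |incr p.F z S.m t - S.s * t| < p.tol n * |t|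
  val : S.s - S.q S.m ≤ s - S.q m

/-- The invariant kept by the construction. -/
structure Inv (n : ℕ) (S : St) : Prop where
  cand : p.Cand n S S.z S.m S.s
  mem : S.z ∈ p.M S.l
  l_lt : S.l < S.t
  r_pos : 0 < S.r
  δ_pos : 0 < S.δ
  q_lip : ∀ y y', |y| ≤ 1 → |y'| ≤ 1 → |S.q y - S.q y'| ≤ 4 * (p.A - p.β n / 3) * |y - y'|
  max : ∀ z m s, p.Cand n S z m s → s - S.q m ≤ S.s - S.q S.m + p.η n - p.β n * (m - S.m) ^ 2

/-- The relation between consecutive stages. -/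
structure Rel (n : ℕ) (S S' : St) : Prop where
  sub : ∀ z m s, p.Cand (n + 1) S' z m s → p.Cand n S z m s
  δ_le : S'.δ ≤ S.δ / 2
  ball : ∀ y, dist y S'.z ≤ S'.δ → dist y S.z < S.δ
  dm : |S'.m - S.m| ≤ p.d n
  ds : |S'.s - S.s| ≤ p.η n + 4 * p.A * p.d n
  l_le : S.l ≤ S'.l
  t_lt : S'.t < S.t
  val : S.s - S.q S.m ≤ S'.s - S'.q S'.m
  q_eq : ∀ y, S'.q y = S.q y + p.β (n + 1) * (y - S'.m) ^ 2
  annulus : ∀ y t, dist y S'.z < S'.δ → S'.r ≤ |t| → |t| ≤ S.r →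
    |incr p.F y S.m t - S.s * t| < p.tol n * |t|

variable {p}

lemma Good.β_pos (h : p.Good) (n : ℕ) : 0 < p.β n := by
  have := h.β0_pos
  unfold β; positivity

lemma Good.η_pos (h : p.Good) (n : ℕ) : 0 < p.η n := by
  have := h.L_pos
  unfold η; positivity

lemma Good.d0_nonneg : 0 ≤ p.d0 := Real.sqrt_nonneg _

lemma Good.d_nonneg (n : ℕ) : 0 ≤ p.d n := mul_nonneg Good.d0_nonneg (by positivity)

lemma Good.d_sq (h : p.Good) (n : ℕ) : p.β n * p.d n ^ 2 = p.η n := by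
  have h1 := h.L_pos
  have h2 := h.β0_pos
  have : p.d0 ^ 2 = (2 * p.L + 1) / p.β0 := Real.sq_sqrt (by positivity)
  unfold β d η
  rw [mul_pow, this, show (1 / 64 : ℝ) = (1 / 4) * ((1 / 4) ^ 2) by norm_num, mul_pow]
  field_simp
  rw [← pow_mul, mul_comm, pow_mul, one_div_pow]

lemma Good.A_pos (h : p.Good) : 0 < p.A := by
  have := h.β0_pos
  unfold A; positivity

lemma Good.tol_pos (h : p.Good) (n : ℕ) : 0 < p.tol n := by
  have h1 := h.L_pos
  have h2 := h.A_pos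
  have h3 := Good.d0_nonneg (p := p)
  have : 0 < p.Λ := lt_trans (by positivity) h.Λ_big
  unfold tol; positivity

lemma Good.tol_half (h : p.Good) (n : ℕ) :
    (p.L + 4 * p.A) * p.d n + p.η n ≤ p.tol n / 2 := by
  have h1 := h.L_pos
  have h2 := h.A_pos
  have h3 := Good.d0_nonneg (p := p)
  have e1 : (1 / 4 : ℝ) ^ n ≤ (1 / 2) ^ n := by gcongr; norm_num
  have e2 : (1 / 64 : ℝ) ^ n ≤ (1 / 2) ^ n := by gcongr; norm_num
  have := h.Λ_big
  unfold d η tol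
  calc (p.L + 4 * p.A) * (p.d0 * (1 / 4) ^ n) + (2 * p.L + 1) * (1 / 64) ^ n
      ≤ (p.L + 4 * p.A) * (p.d0 * (1 / 2) ^ n) + (2 * p.L + 1) * (1 / 2) ^ n := by gcongr
    _ = ((p.L + 4 * p.A) * p.d0 + (2 * p.L + 1)) * (1 / 2) ^ n := by ring
    _ ≤ (p.Λ / 2) * (1 / 2) ^ n := by
      gcongr
      nlinarith [mul_nonneg h1.le h3, mul_nonneg h2.le h3]
    _ = _ := by ring

lemma β_succ (n : ℕ) : p.β (n + 1) = p.β n / 4 := by unfold β; rw [pow_succ]; ring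
lemma η_succ (n : ℕ) : p.η (n + 1) = p.η n / 64 := by unfold η; rw [pow_succ]; ring
lemma d_succ (n : ℕ) : p.d (n + 1) = p.d n / 4 := by unfold d; rw [pow_succ]; ring
lemma tol_succ (n : ℕ) : p.tol (n + 1) = p.tol n / 2 := by unfold tol; rw [pow_succ]; ring

/-- A strict control at `z` on the compact set of `t` with `r' ≤ |t| ≤ r` persists near `z`. -/
lemma Good.annulus (h : p.Good) {z : ℝ × ℝ} {m s r r' τ : ℝ} (hr' : 0 < r')
    (hc : ∀ t, t ≠ 0 → |t| ≤ r → |incr p.F z m t - s * t| < τ * |t|) :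
    ∃ δ > 0, ∀ y t, dist y z < δ → r' ≤ |t| → |t| ≤ r →
      |incr p.F y m t - s * t| < τ * |t| := by
  have hFc : Continuous p.F := by
    have : LipschitzWith p.L.toNNReal p.F := LipschitzWith.of_dist_le_mul fun a b => by
      rw [Real.dist_eq, Real.coe_toNNReal _ h.L_pos.le]; exact h.lip a b
    exact this.continuous
  have hcont : Continuous fun t => τ * |t| - |incr p.F z m t - s * t| := by
    unfold incr; fun_prop
  have hK : IsCompact ({t | r' ≤ |t|} ∩ Icc (-r) r) :=
    isCompact_Icc.inter_left (isClosed_le continuous_const continuous_abs)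
  rcases (({t : ℝ | r' ≤ |t|} ∩ Icc (-r) r)).eq_empty_or_nonempty with he | hne
  · refine ⟨1, one_pos, fun y t _ h1 h2 => ?_⟩
    have : t ∈ ({t : ℝ | r' ≤ |t|} ∩ Icc (-r) r) := ⟨h1, abs_le.1 h2⟩
    rw [he] at this
    exact this.elim
  · obtain ⟨t0, ht0, hmin⟩ := hK.exists_isMinOn hne hcont.continuousOn
    have hpos : 0 < τ * |t0| - |incr p.F z m t0 - s * t0| := by
      have h0 : t0 ≠ 0 := by
        rintro rfl
        have := ht0.1
        simp only [mem_ofPred_eq, abs_zero] at this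
        linarith
      linarith [hc t0 h0 (abs_le.2 ht0.2)]
    set c := τ * |t0| - |incr p.F z m t0 - s * t0|
    have hL := h.L_pos
    refine ⟨c / (2 * p.L), by positivity, fun y t hy h1 h2 => ?_⟩
    have hmt : c ≤ τ * |t| - |incr p.F z m t - s * t| := hmin ⟨h1, abs_le.2 (abs_le.1 h2) |> abs_le.1⟩
    have hb := incr_base h.lip hL.le y z m t
    have hy' : 2 * p.L * dist y z < c := by
      rw [lt_div_iff₀ (by positivity)] at hy
      linarith
    have := abs_add_le (incr p.F y m t - incr p.F z m t) (incr p.F z m t - s * t)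
    rw [sub_add_sub_cancel] at this
    linarith

/-- One step of the construction: a candidate that is almost optimal for the current penalised
functional becomes the next stage, and a quadratic penalty centred at its slope is added. -/
lemma Good.step (h : p.Good) (n : ℕ) (S : St) (hS : p.Inv n S) :
    ∃ S', p.Inv (n + 1) S' ∧ p.Rel n S S' := by
  set V : Set ℝ := {v | ∃ z m s, p.Cand n S z m s ∧ v = s - S.q m} with hVdef
  have hVne : V.Nonempty := ⟨_, S.z, S.m, S.s, hS.cand, rfl⟩
  have hVb : BddAbove V := by
    refine ⟨S.s - S.q S.m + p.η n, ?_⟩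
    rintro v ⟨z, m, s, hc, rfl⟩
    have := hS.max z m s hc
    have := mul_nonneg (h.β_pos n).le (sq_nonneg (m - S.m))
    linarith
  obtain ⟨v, ⟨z, m, s, hc, rfl⟩, hv⟩ := exists_lt_of_lt_csSup hVne
    (show sSup V - p.η (n + 1) < sSup V by linarith [h.η_pos (n + 1)])
  have hopt : ∀ z' m' s', p.Cand n S z' m' s' → s' - S.q m' ≤ s - S.q m + p.η (n + 1) := by
    intro z' m' s' hc'
    have := le_csSup hVb ⟨z', m', s', hc', rfl⟩
    linarith
  have hmax := hS.max z m s hc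
  have hval := hc.val
  have hm1 : |m| ≤ 1 := hc.slope.trans h.m0_le
  have hSm1 : |S.m| ≤ 1 := hS.cand.slope.trans h.m0_le
  have hdm : |m - S.m| ≤ p.d n := by
    have h1 : p.β n * (m - S.m) ^ 2 ≤ p.β n * p.d n ^ 2 := by rw [h.d_sq]; linarith
    have h2 := le_of_mul_le_mul_left h1 (h.β_pos n)
    exact abs_le_of_sq_le_sq h2 (Good.d_nonneg n)
  have hds : |s - S.s| ≤ p.η n + 4 * p.A * p.d n := by
    have h1 := hS.q_lip m S.m hm1 hSm1
    have h2 : 4 * (p.A - p.β n / 3) * |m - S.m| ≤ 4 * p.A * p.d n := by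
      have := h.A_pos
      have := h.β_pos n
      have : 4 * (p.A - p.β n / 3) ≤ 4 * p.A := by linarith
      gcongr
    have h3 := mul_nonneg (h.β_pos n).le (sq_nonneg (m - S.m))
    have h4 := abs_le.1 (h1.trans h2)
    rw [abs_le]
    constructor <;> linarith [h.η_pos n, h4.1, h4.2]
  obtain ⟨l, hlt, hzl⟩ := hc.level
  obtain ⟨r1, hr1, hr1c⟩ := trip_control hc.trip (ε := p.tol (n + 1) / 2)
    (by linarith [h.tol_pos (n + 1)])
  set r' := min r1 S.r with hr'
  have hr'0 : 0 < r' := lt_min hr1 hS.r_pos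
  obtain ⟨δ1, hδ1, hann⟩ := h.annulus hr'0 hc.ctrl
  set δ' := min δ1 (min (S.δ / 2) ((S.δ - dist z S.z) / 2)) with hδ'
  have hgap : 0 < S.δ - dist z S.z := by linarith [hc.near]
  have hδ'0 : 0 < δ' := lt_min hδ1 (lt_min (by linarith [hS.δ_pos]) (by linarith))
  obtain ⟨t', ht'1, ht'2⟩ := exists_between (max_lt hS.l_lt hlt)
  set S' : St := ⟨z, m, s, r', δ', max S.l l, t', fun y => S.q y + p.β (n + 1) * (y - m) ^ 2⟩
    with hS'
  have hqm : S'.q S'.m = S.q m := by simp [hS']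
  have hball : ∀ y, dist y z ≤ δ' → dist y S.z < S.δ := by
    intro y hy
    have h1 : δ' ≤ (S.δ - dist z S.z) / 2 := (min_le_right _ _).trans (min_le_right _ _)
    have := dist_triangle y z S.z
    linarith
  have hannulus : ∀ y t, dist y z < δ' → r' ≤ |t| → |t| ≤ S.r →
      |incr p.F y S.m t - S.s * t| < p.tol n * |t| := fun y t hy =>
    hann y t (hy.trans_le (min_le_left _ _))
  have hsub : ∀ z m s, p.Cand (n + 1) S' z m s → p.Cand n S z m s := by
    intro y m' s' hc'
    obtain ⟨l', hl', hy'⟩ := hc'.level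
    refine ⟨⟨l', hl'.trans ht'2, hy'⟩, hc'.slope, hc'.trip, hball y hc'.near.le, ?_, ?_⟩
    · intro t ht0 htr
      rcases le_total r' |t| with hrt | hrt
      · exact hannulus y t hc'.near hrt htr
      · have c1 := hc'.ctrl t ht0 hrt
        have c2 := incr_slope h.lip h.L_pos.le y S.m m t
        have c3 : |(s - S.s) * t| ≤ (p.η n + 4 * p.A * p.d n) * |t| := by
          rw [abs_mul]; gcongr
        have c4 : p.L * |S.m - m| * |t| ≤ p.L * p.d n * |t| := by
          have := h.L_pos
          rw [abs_sub_comm]; gcongr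
        have c5 : |incr p.F y S.m t - S.s * t| ≤ |incr p.F y S.m t - incr p.F y m t| +
            |incr p.F y m t - s * t| + |(s - S.s) * t| := by
          have : incr p.F y S.m t - S.s * t = (incr p.F y S.m t - incr p.F y m t) +
            (incr p.F y m t - s * t) + (s - S.s) * t := by ring
          rw [this]
          exact abs_add_three _ _ _
        have c6 := h.tol_half n
        have c7 : ((p.L + 4 * p.A) * p.d n + p.η n) * |t| ≤ p.tol n / 2 * |t| := by gcongr
        have c8 : |incr p.F y m t - s * t| < p.tol n / 2 * |t| := by
          rw [← tol_succ]; exact c1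
        nlinarith
    · have := hc'.val
      rw [hqm] at this
      have h5 : S.q m' ≤ S'.q m' := by
        have := mul_nonneg (h.β_pos (n + 1)).le (sq_nonneg (m' - m))
        simp only [hS']; linarith
      have h6 : S'.s = s := rfl
      linarith
  refine ⟨S', ⟨⟨⟨l, (le_max_right _ _).trans_lt ht'1, hzl⟩, hc.slope, hc.trip, ?_, ?_, le_rfl⟩,
    h.mono (le_max_right _ _) hzl, ht'1, hr'0, hδ'0, ?_, ?_⟩, ⟨hsub, ?_, hball, hdm, hds,
    le_max_left _ _, ht'2, ?_, fun y => rfl, hannulus⟩⟩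
  · change dist z z < δ'
    rwa [dist_self]
  · intro t ht0 htr
    have := hr1c t (le_trans htr (min_le_left _ _))
    refine this.trans_lt ?_
    have := h.tol_pos (n + 1)
    have := abs_pos.2 ht0
    gcongr
    linarith
  · intro y y' hy hy'
    have h1 := hS.q_lip y y' hy hy'
    have h2 : |p.β (n + 1) * (y - m) ^ 2 - p.β (n + 1) * (y' - m) ^ 2| ≤
        4 * p.β (n + 1) * |y - y'| := by
      have e : p.β (n + 1) * (y - m) ^ 2 - p.β (n + 1) * (y' - m) ^ 2 =
        p.β (n + 1) * ((y + y' - 2 * m) * (y - y')) := by ring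
      rw [e, abs_mul, abs_mul, abs_of_pos (h.β_pos _)]
      have : |y + y' - 2 * m| ≤ 4 := by
        rw [abs_le] at *
        constructor <;> linarith [hy.1, hy.2, hy'.1, hy'.2, hm1.1, hm1.2]
      have h3 := mul_le_mul_of_nonneg_right this (abs_nonneg (y - y'))
      have h4 := mul_le_mul_of_nonneg_left h3 (h.β_pos (n + 1)).le
      linarith
    have h3 : S'.q y - S'.q y' = (S.q y - S.q y') +
        (p.β (n + 1) * (y - m) ^ 2 - p.β (n + 1) * (y' - m) ^ 2) := by
      simp only [hS']; ring
    rw [h3]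
    refine (abs_add_le _ _).trans ((add_le_add h1 h2).trans (le_of_eq ?_))
    rw [β_succ]; ring
  · intro z' m' s' hc'
    have := hopt z' m' s' (hsub z' m' s' hc')
    rw [hqm]
    simp only [hS']
    linarith
  · exact (min_le_right _ _).trans (min_le_left _ _)
  · rw [hqm]; exact hval

end VP

/-- Dependent choice with an invariant `I` and a relation `Rl` between consecutive terms, both
indexed by the stage. -/
lemma exists_dependent_seq {α : Type*} {I : ℕ → α → Prop} {Rl : ℕ → α → α → Prop} {a0 : α}
    (h0 : I 0 a0) (hs : ∀ n a, I n a → ∃ b, I (n + 1) b ∧ Rl n a b) :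
    ∃ f : ℕ → α, f 0 = a0 ∧ ∀ n, I n (f n) ∧ Rl n (f n) (f (n + 1)) := by
  choose! nx hnx using hs
  have hI : ∀ n, I n (Nat.rec a0 (fun n a => nx n a) n : α) := by
    intro n
    induction n with
    | zero => exact h0
    | succ n ih => exact (hnx n _ ih).1
  exact ⟨fun n => Nat.rec a0 (fun n a => nx n a) n, rfl, fun n => ⟨hI n, (hnx n _ (hI n)).2⟩⟩

namespace VP

variable {p : VP}

lemma Good.initial (h : p.Good) {z0 : ℝ × ℝ} {m0 s0 l0 δ0 : ℝ} (hz : z0 ∈ p.M l0) (hl0 : l0 < 1)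
    (hm : |m0| ≤ p.m0) (ht : Trip p.F z0 m0 s0) (hδ : 0 < δ0) :
    p.Inv 0 ⟨z0, m0, s0, 1, δ0, l0, 1, fun y => p.β 0 * (y - m0) ^ 2⟩ := by
  have hL := h.L_pos
  have hm1 := hm.trans h.m0_le
  refine ⟨⟨⟨l0, hl0, hz⟩, hm, ht, ?_, ?_, le_rfl⟩, hz, hl0, one_pos, hδ, ?_, ?_⟩
  · change dist z0 z0 < δ0
    rwa [dist_self]
  · intro t ht0 _
    change |incr p.F z0 m0 t - s0 * t| < p.tol 0 * |t|
    have h1 := incr_le h.lip hL.le z0 hm1 t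
    have h2 : |s0 * t| ≤ p.L * |t| := by
      rw [abs_mul]
      have := trip_le h.lip hL.le hm1 ht
      gcongr
    have h3 := abs_sub (incr p.F z0 m0 t) (s0 * t)
    have h4 : 2 * p.L < p.tol 0 := by
      have := h.tol_half 0
      have h5 : p.tol 0 = p.Λ := by simp [tol]
      rw [h5]
      have := h.Λ_big
      have h6 : 0 ≤ 2 * ((5 * p.L + 8 * p.A) * p.d0 + (2 * p.L + 1)) := by
        have := h.A_pos
        have := Good.d0_nonneg (p := p)
        positivity
      linarith
    have := mul_lt_mul_of_pos_right h4 (abs_pos.2 ht0)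
    linarith
  · intro y y' hy hy'
    change |p.β 0 * (y - m0) ^ 2 - p.β 0 * (y' - m0) ^ 2| ≤ _
    have e : p.β 0 * (y - m0) ^ 2 - p.β 0 * (y' - m0) ^ 2 =
        p.β 0 * ((y + y' - 2 * m0) * (y - y')) := by ring
    have e2 : 4 * (p.A - p.β 0 / 3) = p.β 0 * 4 := by unfold A β; ring
    rw [e, e2, abs_mul, abs_mul, abs_of_pos (h.β_pos _), mul_assoc]
    have : |y + y' - 2 * m0| ≤ 4 := by
      rw [abs_le] at *
      constructor <;> linarith [hy.1, hy.2, hy'.1, hy'.2, hm1.1, hm1.2]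
    have := h.β_pos 0
    gcongr
  · intro z m s hc
    have hm' := hc.slope.trans h.m0_le
    have h1 := abs_le.1 (trip_le h.lip hL.le hm' hc.trip)
    have h2 := abs_le.1 (trip_le h.lip hL.le hm1 ht)
    have e : p.η 0 = 2 * p.L + 1 := by simp [η]
    change s - p.β 0 * (m - m0) ^ 2 ≤ s0 - p.β 0 * (m0 - m0) ^ 2 + p.η 0 - p.β 0 * (m - m0) ^ 2
    rw [e, sub_self]
    linarith [h1.2, h2.1]

/-- The conclusion of the variational principle: `(x, m, s)` is a directional derivative at a point
of `M l` which no nearby admissible point can improve, where improvement is measured against the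
affine-quadratic function `μ ↦ s + g μ + A μ²` of the change of slope. -/
structure Extremal (p : VP) (K : ℝ) (x : ℝ × ℝ) (l m s g : ℝ) : Prop where
  mem : x ∈ p.M l
  lt_one : l < 1
  g_le : |g| ≤ 4 * p.A
  trip : Trip p.F x m s
  ext : ∀ ε > 0, ∃ δ > 0, ∃ l' > l, l' ≤ 1 ∧ ∀ z μ s', z ∈ p.M l' → dist z x < δ → |m + μ| ≤ p.m0 →
    Trip p.F z (m + μ) s' → ε ≤ s' - s - g * μ - p.A * μ ^ 2 →
    (∀ t, |incr p.F z m t - incr p.F x m t| ≤ K * √(s' - s - g * μ - p.A * μ ^ 2) * |t|) → False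

set_option maxHeartbeats 1000000 in
/-- The limit `(x, m, s)` of the stages is extremal; `g` is the derivative at `m` of the sum `q` of
all penalties, and `A` its quadratic coefficient. A triple which beats the limit by `D` would be a
candidate at the first stage `j` with `η j < D`, exceeding the almost maximal value there. -/
theorem Good.variational (h : p.Good) {z0 : ℝ × ℝ} {m0 s0 l0 δ0 K : ℝ} (hz : z0 ∈ p.M l0)
    (hl0 : l0 < 1) (hm : |m0| ≤ p.m0) (ht : Trip p.F z0 m0 s0) (hδ : 0 < δ0)
    (hK : 0 ≤ K) (hΛ : 2 * (8 * K * √(2 * p.L + 1) + (3 * p.L + 4 * p.A) * p.d0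
      + (2 * p.L + 1)) < p.Λ) :
    ∃ x l m s g, dist x z0 < δ0 ∧ l0 ≤ l ∧ |m - m0| ≤ 2 * p.d0 ∧ p.Extremal K x l m s g := by
  obtain ⟨S, hS0, hS⟩ := exists_dependent_seq (h.initial hz hl0 hm ht hδ) (fun n a => h.step n a)
  have hI := fun n => (hS n).1
  have hR := fun n => (hS n).2
  have hL := h.L_pos
  have hA := h.A_pos
  have hd0 := Good.d0_nonneg (p := p)
  have hcand : ∀ n k z m s, p.Cand (n + k) (S (n + k)) z m s → p.Cand n (S n) z m s := by
    intro n k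
    induction k with
    | zero => exact fun z m s hc => hc
    | succ k ih => exact fun z m s hc => ih z m s ((hR (n + k)).sub z m s hc)
  have hball : ∀ n k y, dist y (S (n + k)).z < (S (n + k)).δ → dist y (S n).z < (S n).δ := by
    intro n k
    induction k with
    | zero => exact fun y hy => hy
    | succ k ih => exact fun y hy => ih y ((hR (n + k)).ball y hy.le)
  have hδn : ∀ n, (S n).δ ≤ δ0 * (1 / 2) ^ n := by
    intro n
    induction n with
    | zero => rw [hS0]; simp
    | succ n ih =>
      have := (hR n).δ_le
      rw [pow_succ]
      linarith
  have hzdist : ∀ n k, dist (S (n + k)).z (S n).z < (S n).δ := fun n k =>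
    (hcand n k _ _ _ (hI (n + k)).cand).near
  have hzc : CauchySeq fun n => (S n).z := by
    refine cauchySeq_of_le_geometric (1 / 2) δ0 (by norm_num) fun n => ?_
    rw [dist_comm]
    exact (hzdist n 1).le.trans (hδn n)
  obtain ⟨x, hx⟩ := cauchySeq_tendsto_of_complete hzc
  have hxball : ∀ n, dist x (S n).z < (S n).δ := by
    intro n
    refine (hR n).ball x ?_
    have h1 : Tendsto (fun k => dist (S k).z (S (n + 1)).z) atTop (𝓝 (dist x (S (n + 1)).z)) :=
      hx.dist tendsto_const_nhds
    refine le_of_tendsto h1 (eventually_atTop.2 ⟨n + 1, fun k hk => ?_⟩)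
    obtain ⟨j, rfl⟩ := Nat.exists_eq_add_of_le hk
    exact (hzdist (n + 1) j).le
  -- the limit level lies strictly between the levels `l` and the thresholds `t` of all stages
  have hlmono : Monotone fun n => (S n).l := monotone_nat_of_le_succ fun n => (hR n).l_le
  have htanti : StrictAnti fun n => (S n).t := strictAnti_nat_of_succ_lt fun n => (hR n).t_lt
  have hlt : ∀ n k, (S n).l < (S k).t := by
    intro n k
    rcases le_total n k with hnk | hnk
    · exact (hlmono hnk).trans_lt (hI k).l_lt
    · exact (hI n).l_lt.trans_le (htanti.antitone hnk)
  have hlb : BddAbove (range fun n => (S n).l) := ⟨(S 0).t, by rintro _ ⟨n, rfl⟩; exact (hlt n 0).le⟩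
  set l := ⨆ n, (S n).l with hl
  have hll : ∀ n, (S n).l ≤ l := fun n => le_ciSup hlb n
  have hlt' : ∀ n, l < (S n).t := fun n =>
    (ciSup_le fun k => (hlt k (n + 1)).le).trans_lt (hR n).t_lt
  have ht1 : (S 0).t = 1 := by rw [hS0]
  have hxl : x ∈ p.M l := (h.closed l).mem_of_tendsto hx
    (Eventually.of_forall fun n => h.mono (hll n) (hI n).mem)
  have hmd : ∀ n, dist (S n).m (S (n + 1)).m ≤ p.d0 * (1 / 4) ^ n := fun n => by
    rw [dist_comm, Real.dist_eq]; exact (hR n).dm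
  obtain ⟨m, hmt⟩ := cauchySeq_tendsto_of_complete
    (cauchySeq_of_le_geometric (1 / 4) p.d0 (by norm_num) hmd)
  have hmn : ∀ n, |m - (S n).m| ≤ 2 * p.d n := by
    intro n
    have := dist_le_of_le_geometric_of_tendsto (1 / 4) p.d0 (by norm_num) hmd hmt n
    rw [dist_comm, Real.dist_eq] at this
    refine this.trans ?_
    have hd := Good.d_nonneg (p := p) n
    unfold d at *
    rw [div_le_iff₀ (by norm_num)]
    linarith
  have hm1 : |m| ≤ 1 := by
    refine le_of_tendsto hmt.abs (Eventually.of_forall fun n => ?_)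
    exact (hI n).cand.slope.trans h.m0_le
  have hSm1 : ∀ n, |(S n).m| ≤ 1 := fun n => (hI n).cand.slope.trans h.m0_le
  have hsd : ∀ n, dist (S n).s (S (n + 1)).s ≤ (2 * p.L + 1 + 4 * p.A * p.d0) * (1 / 4) ^ n := by
    intro n
    rw [dist_comm, Real.dist_eq]
    refine (hR n).ds.trans ?_
    have : (1 / 64 : ℝ) ^ n ≤ (1 / 4) ^ n := by gcongr; norm_num
    unfold η d
    have := mul_le_mul_of_nonneg_left this (show 0 ≤ 2 * p.L + 1 by linarith)
    linarith
  obtain ⟨s, hst⟩ := cauchySeq_tendsto_of_complete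
    (cauchySeq_of_le_geometric (1 / 4) _ (by norm_num) hsd)
  -- the penalties converge to a quadratic polynomial `q` with leading coefficient `A`
  have hqn : ∀ n y, (S n).q y = ∑ i ∈ Finset.range (n + 1), p.β i * (y - (S i).m) ^ 2 := by
    intro n y
    induction n with
    | zero => rw [hS0]; simp [hS0]
    | succ n ih => rw [Finset.sum_range_succ, ← ih]; exact (hR n).q_eq y
  have hβs : HasSum p.β p.A := by
    have := (hasSum_geometric_of_lt_one (r := (1 / 4 : ℝ)) (by norm_num) (by norm_num)).mul_left p.β0
    have e : p.A = p.β0 * (1 - 1 / 4)⁻¹ := by unfold A; norm_num; ring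
    rw [e]; exact this
  have hsum : ∀ (c : ℕ → ℝ) (B : ℝ), (∀ i, |c i| ≤ B) → Summable fun i => p.β i * c i := by
    intro c B hB
    refine Summable.of_norm_bounded (hβs.summable.mul_right B) fun i => ?_
    rw [Real.norm_eq_abs, abs_mul, abs_of_pos (h.β_pos i)]
    exact mul_le_mul_of_nonneg_left (hB i) (h.β_pos i).le
  have hd2 : ∀ y i, |y - (S i).m| ≤ |y| + 1 := fun y i => (abs_sub _ _).trans (by linarith [hSm1 i])
  have hqsum : ∀ y, Summable fun i => p.β i * (y - (S i).m) ^ 2 := by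
    intro y
    refine hsum _ ((|y| + 1) ^ 2) fun i => ?_
    rw [abs_pow]
    gcongr
    exact hd2 y i
  set q : ℝ → ℝ := fun y => ∑' i, p.β i * (y - (S i).m) ^ 2 with hq
  have hqt : ∀ y, Tendsto (fun n => (S n).q y) atTop (𝓝 (q y)) := by
    intro y
    have := ((hqsum y).hasSum.tendsto_sum_nat).comp (tendsto_add_atTop_nat 1)
    refine this.congr fun n => ?_
    rw [hqn]; rfl
  have hqle : ∀ n y, (S n).q y ≤ q y := by
    intro n y
    rw [hqn]
    exact (hqsum y).sum_le_tsum _ fun i _ => mul_nonneg (h.β_pos i).le (sq_nonneg _)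
  have hgs := hsum (fun i => m - (S i).m) 2 (fun i => (hd2 m i).trans (by linarith))
  set g := 2 * ∑' i, p.β i * (m - (S i).m) with hg
  have hgle : |g| ≤ 4 * p.A := by
    have : |∑' i, p.β i * (m - (S i).m)| ≤ 2 * p.A := by
      rw [← Real.norm_eq_abs, mul_comm]
      refine tsum_of_norm_bounded (hβs.mul_right 2) fun i => ?_
      rw [Real.norm_eq_abs, abs_mul, abs_of_pos (h.β_pos i)]
      exact mul_le_mul_of_nonneg_left ((hd2 m i).trans (by linarith)) (h.β_pos i).le
    rw [hg, abs_mul, abs_two]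
    linarith
  have hquad : ∀ μ, q (m + μ) = q m + g * μ + p.A * μ ^ 2 := by
    intro μ
    have e : ∀ i, p.β i * (m + μ - (S i).m) ^ 2 = p.β i * (m - (S i).m) ^ 2 +
        (2 * μ) * (p.β i * (m - (S i).m)) + p.β i * μ ^ 2 := fun i => by ring
    simp only [hq]
    rw [tsum_congr e, (((hqsum m).add (hgs.mul_left _))).tsum_add (hβs.summable.mul_right _),
      (hqsum m).tsum_add (hgs.mul_left _), tsum_mul_left, tsum_mul_right, hβs.tsum_eq, hg]
    ring
  -- the values increase to `s - q m`
  have hPmono : Monotone fun n => (S n).s - (S n).q (S n).m :=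
    monotone_nat_of_le_succ fun n => (hR n).val
  have hdn : Tendsto (fun n => p.d n) atTop (𝓝 0) := by
    have := (tendsto_pow_atTop_nhds_zero_of_lt_one (r := (1 / 4 : ℝ)) (by norm_num)
      (by norm_num)).const_mul p.d0
    rwa [mul_zero] at this
  have hPt : Tendsto (fun n => (S n).s - (S n).q (S n).m) atTop (𝓝 (s - q m)) := by
    refine hst.sub ?_
    have h1 : Tendsto (fun n => (S n).q (S n).m - (S n).q m) atTop (𝓝 0) := by
      refine squeeze_zero_norm (a := fun n => 4 * p.A * (2 * p.d n)) (fun n => ?_) ?_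
      · rw [Real.norm_eq_abs]
        refine ((hI n).q_lip _ _ (hSm1 n) hm1).trans ?_
        have := h.β_pos n
        have h2 : |(S n).m - m| ≤ 2 * p.d n := by rw [abs_sub_comm]; exact hmn n
        have h3 : 4 * (p.A - p.β n / 3) ≤ 4 * p.A := by linarith
        gcongr
      · have := (hdn.const_mul 2).const_mul (4 * p.A)
        simpa using this
    have h2 := h1.add (hqt m)
    simpa using h2
  have hPle : ∀ n, (S n).s - (S n).q (S n).m ≤ s - q m := fun n => hPmono.ge_of_tendsto hPt n
  -- the strict controls of the candidates pass to the limit point as weak inequalities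
  have hxctrl : ∀ n t, |t| ≤ (S n).r → |incr p.F x (S n).m t - (S n).s * t| ≤ p.tol n * |t| := by
    intro n t htr
    rcases eq_or_ne t 0 with rfl | ht0
    · simp [incr_zero]
    have h1 : Tendsto (fun k => |incr p.F (S k).z (S n).m t - (S n).s * t|) atTop
        (𝓝 |incr p.F x (S n).m t - (S n).s * t|) := by
      have h2 : Tendsto (fun k => incr p.F (S k).z (S n).m t) atTop (𝓝 (incr p.F x (S n).m t)) := by
        refine tendsto_iff_dist_tendsto_zero.2 (squeeze_zero (fun _ => dist_nonneg)
          (fun k => (Real.dist_eq _ _).le.trans (incr_base h.lip hL.le (S k).z x (S n).m t)) ?_)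
        have := (tendsto_iff_dist_tendsto_zero.1 hx).const_mul (2 * p.L)
        rwa [mul_zero] at this
      exact (h2.sub_const _).abs
    refine le_of_tendsto h1 (eventually_atTop.2 ⟨n, fun k hk => ?_⟩)
    obtain ⟨j, rfl⟩ := Nat.exists_eq_add_of_le hk
    exact ((hcand n j _ _ _ (hI (n + j)).cand).ctrl t ht0 htr).le
  have htoln : Tendsto (fun n => p.tol n) atTop (𝓝 0) := by
    have := (tendsto_pow_atTop_nhds_zero_of_lt_one (r := (1 / 2 : ℝ)) (by norm_num)
      (by norm_num)).const_mul p.Λ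
    rwa [mul_zero] at this
  have hηn : Tendsto (fun n => p.η n) atTop (𝓝 0) := by
    have := (tendsto_pow_atTop_nhds_zero_of_lt_one (r := (1 / 64 : ℝ)) (by norm_num)
      (by norm_num)).const_mul (2 * p.L + 1)
    rwa [mul_zero] at this
  have htrip : Trip p.F x m s := by
    refine trip_of_control fun ε hε => ?_
    have h1 : Tendsto (fun n => p.L * |m - (S n).m| + p.tol n + |(S n).s - s|) atTop (𝓝 0) := by
      have a1 := ((hmt.const_sub m).abs).const_mul p.L
      have a2 := (hst.sub_const s).abs
      simpa using (a1.add htoln).add a2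
    obtain ⟨n, hn⟩ := (h1.eventually (gt_mem_nhds hε)).exists
    refine ⟨(S n).r, (hI n).r_pos, fun t ht => ?_⟩
    have c1 := incr_slope h.lip hL.le x m (S n).m t
    have c2 := hxctrl n t ht
    have c3 : |((S n).s - s) * t| = |(S n).s - s| * |t| := abs_mul _ _
    have c4 : incr p.F x m t - s * t = (incr p.F x m t - incr p.F x (S n).m t) +
      (incr p.F x (S n).m t - (S n).s * t) + ((S n).s - s) * t := by ring
    rw [c4]
    refine (abs_add_three _ _ _).trans ?_
    have := mul_le_mul_of_nonneg_right hn.le (abs_nonneg t)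
    linarith
  refine ⟨x, l, m, s, g, ?_, ?_, ?_, hxl, ht1 ▸ hlt' 0, hgle, htrip, ?_⟩
  · have := hxball 0
    rwa [hS0] at this
  · have := hll 0
    rwa [hS0] at this
  · have := hmn 0
    rw [hS0] at this
    simpa [d] using this
  -- a competitor beating the limit by `D` is a candidate at the first stage `j` with `η j < D`
  intro ε hε
  obtain ⟨J, hJ⟩ := (hηn.eventually (gt_mem_nhds hε)).exists
  obtain ⟨l', hl'1, hl'2⟩ := exists_between (hlt' J)
  refine ⟨(S (J + 1)).δ - dist x (S (J + 1)).z, by linarith [hxball (J + 1)], l', hl'1,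
    (hl'2.trans_le (htanti.antitone (Nat.zero_le J))).le.trans ht1.le, ?_⟩
  intro z μ s' hz hzx hμ hT hD hctrl
  set D := s' - s - g * μ - p.A * μ ^ 2 with hDdef
  have hex : ∃ j, p.η j < D := ⟨J, hJ.trans_le hD⟩
  classical
  set j := Nat.find hex with hj
  have hjD : p.η j < D := Nat.find_spec hex
  have hjJ : j ≤ J := Nat.find_min' hex (hJ.trans_le hD)
  have hzJ : dist z (S (J + 1)).z < (S (J + 1)).δ := by
    have := dist_triangle z x (S (J + 1)).z
    linarith
  have hzj1 : dist z (S (j + 1)).z < (S (j + 1)).δ := by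
    obtain ⟨k, hk⟩ := Nat.exists_eq_add_of_le (Nat.succ_le_succ hjJ)
    simp only [Nat.succ_eq_add_one] at hk
    refine hball (j + 1) k z ?_
    rwa [← hk]
  have hzj : dist z (S j).z < (S j).δ := (hR j).ball z hzj1.le
  have hm1' : |m + μ| ≤ 1 := hμ.trans h.m0_le
  have hvalj : s - q m + D ≤ s' - (S j).q (m + μ) := by
    have := hqle j (m + μ)
    rw [hquad] at this
    rw [hDdef]; linarith
  have hc : p.Cand j (S j) z (m + μ) s' := by
    refine ⟨⟨l', hl'2.trans_le (htanti.antitone hjJ), hz⟩, hμ, hT, hzj, ?_, ?_⟩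
    · intro t ht0 htr
      have htp := abs_pos.2 ht0
      rcases Nat.eq_zero_or_pos j with hj0 | hj0
      · -- at stage zero the initial tolerance exceeds twice the Lipschitz constant
        have h1 := incr_le h.lip hL.le z (hSm1 j) t
        have h2 : |(S j).s * t| ≤ p.L * |t| := by
          rw [abs_mul]
          have := trip_le h.lip hL.le (hSm1 j) (hI j).cand.trip
          gcongr
        have h3 := abs_sub (incr p.F z (S j).m t) ((S j).s * t)
        have h4 : 2 * p.L < p.tol j := by
          rw [hj0]
          have := h.Λ_big
          have h6 : 0 ≤ 2 * ((5 * p.L + 8 * p.A) * p.d0 + (2 * p.L + 1)) := by positivity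
          have h5 : p.tol 0 = p.Λ := by simp [tol]
          rw [h5]; linarith
        have := mul_lt_mul_of_pos_right h4 htp
        linarith
      rcases le_total (S (j + 1)).r |t| with hrt | hrt
      · exact (hR j).annulus z t hzj1 hrt htr
      · -- small increments are compared with those at the limit point
        have c1 := incr_slope h.lip hL.le z (S j).m m t
        have c2 := hctrl t
        have c3 := incr_slope h.lip hL.le x m (S (j + 1)).m t
        have c4 := hxctrl (j + 1) t hrt
        have c5 : |((S (j + 1)).s - (S j).s) * t| ≤ (p.η j + 4 * p.A * p.d j) * |t| := by
          rw [abs_mul]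
          have := (hR j).ds
          gcongr
        have hdec : incr p.F z (S j).m t - (S j).s * t =
            (incr p.F z (S j).m t - incr p.F z m t) + (incr p.F z m t - incr p.F x m t) +
            (incr p.F x m t - incr p.F x (S (j + 1)).m t) +
            ((incr p.F x (S (j + 1)).m t - (S (j + 1)).s * t) +
              ((S (j + 1)).s - (S j).s) * t) := by ring
        have c6 : |incr p.F z (S j).m t - (S j).s * t| ≤ p.L * |(S j).m - m| * |t| +
            K * √D * |t| + p.L * |m - (S (j + 1)).m| * |t| +
            (p.tol (j + 1) * |t| + (p.η j + 4 * p.A * p.d j) * |t|) := by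
          rw [hdec]
          refine (abs_add_le _ _).trans (add_le_add ((abs_add_three _ _ _).trans
            (add_le_add (add_le_add c1 c2) c3)) ((abs_add_le _ _).trans (add_le_add c4 c5)))
        refine c6.trans_lt ?_
        have hDle : √D ≤ 8 * √(2 * p.L + 1) * (1 / 8) ^ j := by
          obtain ⟨i, hi⟩ := Nat.exists_eq_succ_of_ne_zero hj0.ne'
          have hnot : D ≤ p.η i := by
            by_contra hcon
            have : j ≤ i := Nat.find_min' hex (not_le.1 hcon)
            omega
          have e : p.η i = (8 * √(2 * p.L + 1) * (1 / 8) ^ j) ^ 2 := by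
            rw [hi]
            unfold η
            have e8 : (1 / 64 : ℝ) ^ i = (1 / 8) ^ i * (1 / 8) ^ i := by
              rw [← mul_pow]; norm_num
            have hs := Real.mul_self_sqrt (show 0 ≤ 2 * p.L + 1 by linarith)
            calc (2 * p.L + 1) * (1 / 64) ^ i
                = (√(2 * p.L + 1) * √(2 * p.L + 1)) * ((1 / 8) ^ i * (1 / 8) ^ i) := by
                  rw [hs, e8]
              _ = _ := by rw [Nat.succ_eq_add_one, pow_succ (1 / 8 : ℝ) i]; ring
          rw [e] at hnot
          calc √D ≤ √((8 * √(2 * p.L + 1) * (1 / 8) ^ j) ^ 2) := Real.sqrt_le_sqrt hnot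
            _ = _ := Real.sqrt_sq (by positivity)
        have b1 : |(S j).m - m| ≤ 2 * p.d j := by rw [abs_sub_comm]; exact hmn j
        have b2 : |m - (S (j + 1)).m| ≤ p.d j := by
          have := hmn (j + 1)
          rw [d_succ] at this
          have := Good.d_nonneg (p := p) j
          linarith
        have b3 : K * √D + (3 * p.L + 4 * p.A) * p.d j + p.η j < p.tol j / 2 := by
          have e1 : (1 / 4 : ℝ) ^ j ≤ (1 / 2) ^ j := by gcongr; norm_num
          have e2 : (1 / 64 : ℝ) ^ j ≤ (1 / 2) ^ j := by gcongr; norm_num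
          have e3 : (1 / 8 : ℝ) ^ j ≤ (1 / 2) ^ j := by gcongr; norm_num
          unfold d η tol
          calc K * √D + (3 * p.L + 4 * p.A) * (p.d0 * (1 / 4) ^ j) + (2 * p.L + 1) * (1 / 64) ^ j
              ≤ K * (8 * √(2 * p.L + 1) * (1 / 2) ^ j) +
                (3 * p.L + 4 * p.A) * (p.d0 * (1 / 2) ^ j) + (2 * p.L + 1) * (1 / 2) ^ j := by
                gcongr
                exact hDle.trans (by gcongr)
            _ = (8 * K * √(2 * p.L + 1) + (3 * p.L + 4 * p.A) * p.d0 + (2 * p.L + 1)) *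
                (1 / 2) ^ j := by ring
            _ < (p.Λ / 2) * (1 / 2) ^ j := by
                gcongr
                linarith
            _ = _ := by ring
        have b4 := mul_lt_mul_of_pos_right b3 htp
        have b5 : p.L * |(S j).m - m| * |t| ≤ p.L * (2 * p.d j) * |t| := by gcongr
        have b6 : p.L * |m - (S (j + 1)).m| * |t| ≤ p.L * p.d j * |t| := by gcongr
        rw [tol_succ]
        calc p.L * |(S j).m - m| * |t| + K * √D * |t| + p.L * |m - (S (j + 1)).m| * |t| +
              (p.tol j / 2 * |t| + (p.η j + 4 * p.A * p.d j) * |t|)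
            ≤ p.L * (2 * p.d j) * |t| + K * √D * |t| + p.L * p.d j * |t| +
              (p.tol j / 2 * |t| + (p.η j + 4 * p.A * p.d j) * |t|) := by linarith only [b5, b6]
          _ = (K * √D + (3 * p.L + 4 * p.A) * p.d j + p.η j) * |t| + p.tol j / 2 * |t| := by ring
          _ < p.tol j / 2 * |t| + p.tol j / 2 * |t| := by linarith only [b4]
          _ = p.tol j * |t| := by ring
    · have := hPle j
      have := h.η_pos j
      linarith
  have h1 := (hI j).max _ _ _ hc
  have h2 := hPle j
  have h3 := mul_nonneg (h.β_pos j).le (sq_nonneg (m + μ - (S j).m))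
  linarith

end VP

/-! ### Two-segment curves -/

/-- Outside a null set, the minimum of two affine functions coincides near the point with one of
them. -/
lemma tent_min (c1 e1 c2 e2 : ℝ) : ∃ N : Set ℝ, volume N = 0 ∧ ∀ a ∉ N,
    (min (e1 + c1 * a) (e2 + c2 * a) = e1 + c1 * a ∧ ∀ᶠ t in 𝓝 (0:ℝ),
      min (e1 + c1 * (a + t)) (e2 + c2 * (a + t)) = min (e1 + c1 * a) (e2 + c2 * a) + c1 * t) ∨
    (min (e1 + c1 * a) (e2 + c2 * a) = e2 + c2 * a ∧ ∀ᶠ t in 𝓝 (0:ℝ),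
      min (e1 + c1 * (a + t)) (e2 + c2 * (a + t)) = min (e1 + c1 * a) (e2 + c2 * a) + c2 * t) := by
  by_cases hc : c1 = c2
  · subst hc
    refine ⟨∅, measure_empty, fun a _ => ?_⟩
    rcases le_total e1 e2 with h | h
    · left
      have : ∀ y, min (e1 + c1 * y) (e2 + c1 * y) = e1 + c1 * y := fun y => min_eq_left (by linarith)
      simp only [this, true_and]
      exact Eventually.of_forall fun t => by ring
    · right
      have : ∀ y, min (e1 + c1 * y) (e2 + c1 * y) = e2 + c1 * y := fun y => min_eq_right (by linarith)
      simp only [this, true_and]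
      exact Eventually.of_forall fun t => by ring
  · refine ⟨{a | e1 + c1 * a = e2 + c2 * a}, ?_, fun a ha => ?_⟩
    · refine Set.Subsingleton.measure_zero (fun a ha b hb => ?_) _
      simp only [mem_ofPred_eq] at ha hb
      have : (c1 - c2) * (a - b) = 0 := by linarith
      rcases mul_eq_zero.1 this with h | h
      · exact absurd (by linarith) hc
      · linarith
    · have k1 : Continuous fun t => e1 + c1 * (a + t) := by fun_prop
      have k2 : Continuous fun t => e2 + c2 * (a + t) := by fun_prop
      rcases lt_or_gt_of_ne ha with h | h
      · left
        rw [min_eq_left h.le]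
        refine ⟨rfl, ?_⟩
        have : ∀ᶠ t in 𝓝 (0:ℝ), e1 + c1 * (a + t) < e2 + c2 * (a + t) :=
          k1.continuousAt.eventually_lt k2.continuousAt (by simpa using h)
        filter_upwards [this] with t ht
        rw [min_eq_left ht.le]; ring
      · right
        rw [min_eq_right h.le]
        refine ⟨rfl, ?_⟩
        have : ∀ᶠ t in 𝓝 (0:ℝ), e2 + c2 * (a + t) < e1 + c1 * (a + t) :=
          k2.continuousAt.eventually_lt k1.continuousAt (by simpa using h)
        filter_upwards [this] with t ht
        rw [min_eq_right ht.le]; ring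

/-- Two lines which nearly pass through `(-R, 0)`, `(ξ, b)` and through `(R, 0)`, `(ξ, b)`
contain the graph of a flat Lipschitz function `o` which is almost `0` at `±R` and almost `b`
at `ξ`. -/
lemma tent_curve {R κ η ξ b c1 e1 c2 e2 : ℝ} (hR : 0 < R) (hκ : 0 < κ) (hη : η ≤ κ / 2)
    (hξ : |ξ| ≤ R / 16) (hb : |b| ≤ κ * R)
    (h1 : |c1 - b / (R + ξ)| ≤ η) (h1' : |e1 - b / (R + ξ) * R| ≤ η * R)
    (h2 : |c2 + b / (R - ξ)| ≤ η) (h2' : |e2 - b / (R - ξ) * R| ≤ η * R) :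
    ∃ o : ℝ → ℝ, (∀ a a', |o a - o a'| ≤ 2 * κ * |a - a'|) ∧ |o R| ≤ 2 * η * R ∧
      |o (-R)| ≤ 2 * η * R ∧ |o ξ - b| ≤ 2 * η * R ∧
      ∃ N : Set ℝ, volume N = 0 ∧ ∀ a ∉ N,
        (o a = e1 + c1 * a ∧ ∀ᶠ t in 𝓝 (0:ℝ), o (a + t) = o a + c1 * t) ∨
        (o a = e2 + c2 * a ∧ ∀ᶠ t in 𝓝 (0:ℝ), o (a + t) = o a + c2 * t) := by
  have hξ' := abs_le.1 hξ
  have hp1 : 0 < R + ξ := by linarith [hξ'.1]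
  have hp2 : 0 < R - ξ := by linarith [hξ'.2]
  set S1 := b / (R + ξ) with hS1
  set S2 := b / (R - ξ) with hS2
  have hs1 : S1 * (R + ξ) = b := div_mul_cancel₀ _ hp1.ne'
  have hs2 : S2 * (R - ξ) = b := div_mul_cancel₀ _ hp2.ne'
  have hS1b : |S1| ≤ 16 / 15 * κ := by
    rw [hS1, abs_div, abs_of_pos hp1, div_le_iff₀ hp1]
    nlinarith [hξ'.1]
  have hS2b : |S2| ≤ 16 / 15 * κ := by
    rw [hS2, abs_div, abs_of_pos hp2, div_le_iff₀ hp2]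
    nlinarith [hξ'.2]
  have hc1 : |c1| ≤ 2 * κ := by
    have := abs_add_le (c1 - S1) S1
    rw [sub_add_cancel] at this
    linarith
  have hc2 : |c2| ≤ 2 * κ := by
    have := abs_sub (c2 + S2) S2
    rw [add_sub_cancel_right] at this
    linarith
  have ha1 : ∀ a, |a| ≤ R → |(e1 + c1 * a) - S1 * (a + R)| ≤ 2 * η * R := by
    intro a ha
    have e : (e1 + c1 * a) - S1 * (a + R) = (e1 - S1 * R) + (c1 - S1) * a := by ring
    have h3 : |(c1 - S1) * a| ≤ η * R := by
      rw [abs_mul]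
      exact mul_le_mul h1 ha (abs_nonneg _) ((abs_nonneg _).trans h1)
    rw [e]
    refine (abs_add_le _ _).trans (by linarith)
  have ha2 : ∀ a, |a| ≤ R → |(e2 + c2 * a) - S2 * (R - a)| ≤ 2 * η * R := by
    intro a ha
    have e : (e2 + c2 * a) - S2 * (R - a) = (e2 - S2 * R) + (c2 + S2) * a := by ring
    have h3 : |(c2 + S2) * a| ≤ η * R := by
      rw [abs_mul]
      exact mul_le_mul h2 ha (abs_nonneg _) ((abs_nonneg _).trans h2)
    rw [e]
    refine (abs_add_le _ _).trans (by linarith)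
  have hl1 : ∀ a a', |(e1 + c1 * a) - (e1 + c1 * a')| ≤ 2 * κ * |a - a'| := by
    intro a a'
    rw [show (e1 + c1 * a) - (e1 + c1 * a') = c1 * (a - a') by ring, abs_mul]
    gcongr
  have hl2 : ∀ a a', |(e2 + c2 * a) - (e2 + c2 * a')| ≤ 2 * κ * |a - a'| := by
    intro a a'
    rw [show (e2 + c2 * a) - (e2 + c2 * a') = c2 * (a - a') by ring, abs_mul]
    gcongr
  have hRR : |R| ≤ R := (abs_of_pos hR).le
  have hRR' : |(-R)| ≤ R := by rw [abs_neg]; exact hRR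
  have hξR : |ξ| ≤ R := by linarith
  rcases le_total 0 b with hb0 | hb0
  · have hS10 : 0 ≤ S1 := div_nonneg hb0 hp1.le
    have hS20 : 0 ≤ S2 := div_nonneg hb0 hp2.le
    have hcmp : ∀ a, |a| ≤ R → |min (e1 + c1 * a) (e2 + c2 * a) -
        min (S1 * (a + R)) (S2 * (R - a))| ≤ 2 * η * R := fun a ha =>
      (abs_min_sub_min_le_max _ _ _ _).trans (max_le (ha1 a ha) (ha2 a ha))
    obtain ⟨N, hN, hN'⟩ := tent_min c1 e1 c2 e2
    refine ⟨fun a => min (e1 + c1 * a) (e2 + c2 * a), fun a a' =>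
      (abs_min_sub_min_le_max _ _ _ _).trans (max_le (hl1 a a') (hl2 a a')), ?_, ?_, ?_, N, hN, hN'⟩
    · have := hcmp R hRR
      rwa [sub_self, mul_zero, min_eq_right (mul_nonneg hS10 (by linarith)), sub_zero] at this
    · have := hcmp (-R) hRR'
      rwa [neg_add_cancel, mul_zero, min_eq_left (mul_nonneg hS20 (by linarith)), sub_zero] at this
    · have := hcmp ξ hξR
      rwa [add_comm ξ R, hs1, hs2, min_self] at this
  · have hS10 : S1 ≤ 0 := div_nonpos_of_nonpos_of_nonneg hb0 hp1.le
    have hS20 : S2 ≤ 0 := div_nonpos_of_nonpos_of_nonneg hb0 hp2.le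
    have hcmp : ∀ a, |a| ≤ R → |max (e1 + c1 * a) (e2 + c2 * a) -
        max (S1 * (a + R)) (S2 * (R - a))| ≤ 2 * η * R := fun a ha =>
      (abs_max_sub_max_le_max _ _ _ _).trans (max_le (ha1 a ha) (ha2 a ha))
    obtain ⟨N, hN, hN'⟩ := tent_min (-c1) (-e1) (-c2) (-e2)
    have hneg : ∀ a, min (-e1 + -c1 * a) (-e2 + -c2 * a) = -max (e1 + c1 * a) (e2 + c2 * a) := by
      intro a
      rw [← min_neg_neg]
      congr 1 <;> ring
    refine ⟨fun a => max (e1 + c1 * a) (e2 + c2 * a), fun a a' =>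
      (abs_max_sub_max_le_max _ _ _ _).trans (max_le (hl1 a a') (hl2 a a')), ?_, ?_, ?_, N, hN, ?_⟩
    · have := hcmp R hRR
      rwa [sub_self, mul_zero, max_eq_right (mul_nonpos_of_nonpos_of_nonneg hS10 (by linarith)),
        sub_zero] at this
    · have := hcmp (-R) hRR'
      rwa [neg_add_cancel, mul_zero, max_eq_left (mul_nonpos_of_nonpos_of_nonneg hS20 (by linarith)),
        sub_zero] at this
    · have := hcmp ξ hξR
      rwa [add_comm ξ R, hs1, hs2, max_self] at this
    · intro a ha
      have := hN' a ha
      simp only [hneg] at this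
      refine this.imp (fun h => ⟨by linarith [h.1], ?_⟩) (fun h => ⟨by linarith [h.1], ?_⟩)
      · filter_upwards [h.2] with t ht
        linarith
      · filter_upwards [h.2] with t ht
        linarith

/-! ### Differentiability at extremal points -/

/-- The error of the affine approximation of `F` along the graph of `o` over the line through `x`
of slope `m`. -/
def graphErr (F : ℝ × ℝ → ℝ) (x : ℝ × ℝ) (m s g : ℝ) (o : ℝ → ℝ) (a : ℝ) : ℝ :=
  F (x.1 + a, x.2 + m * a + o a) - F x - s * a - g * o a

section
variable {F : ℝ × ℝ → ℝ} {L A m s g κ : ℝ} {x : ℝ × ℝ} {o : ℝ → ℝ}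

lemma graphErr_lip (hF : ∀ a b : ℝ × ℝ, |F a - F b| ≤ L * dist a b) (hL : 0 ≤ L) (hA : 0 ≤ A)
    (hs : |s| ≤ L) (hg : |g| ≤ 4 * A) (hm : |m| ≤ 1 / 2) (hκ : κ ≤ 1 / 16)
    (ho : ∀ a a', |o a - o a'| ≤ 2 * κ * |a - a'|) (a b : ℝ) :
    |graphErr F x m s g o a - graphErr F x m s g o b| ≤ (3 * L + 4 * A) * |a - b| := by
  have h0 := abs_nonneg (a - b)
  have ho' : |o a - o b| ≤ 1 / 8 * |a - b| := (ho a b).trans (by gcongr; linarith)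
  have h1 : |F (x.1 + a, x.2 + m * a + o a) - F (x.1 + b, x.2 + m * b + o b)| ≤ L * |a - b| := by
    apply F_lip_sub hF hL
    · rw [add_sub_add_left_eq_sub]
    · rw [show x.2 + m * a + o a - (x.2 + m * b + o b) = m * (a - b) + (o a - o b) by ring]
      refine (abs_add_le _ _).trans ?_
      rw [abs_mul]
      have : |m| * |a - b| ≤ 1 / 2 * |a - b| := by gcongr
      linarith
  have h2 : |s * (a - b)| ≤ L * |a - b| := by rw [abs_mul]; gcongr
  have h3 : |g * (o a - o b)| ≤ 4 * A * (1 / 8 * |a - b|) := by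
    rw [abs_mul]; exact mul_le_mul hg ho' (abs_nonneg _) (by positivity)
  have e : graphErr F x m s g o a - graphErr F x m s g o b =
    (F (x.1 + a, x.2 + m * a + o a) - F (x.1 + b, x.2 + m * b + o b)) - s * (a - b)
      - g * (o a - o b) := by unfold graphErr; ring
  rw [e, abs_le]
  have h1 := abs_le.1 h1
  have h2 := abs_le.1 h2
  have h3 := abs_le.1 h3
  have h4 : 0 ≤ L * |a - b| := by positivity
  have h5 : 0 ≤ A * |a - b| := by positivity
  constructor <;> linarith

lemma graphErr_small (hF : ∀ a b : ℝ × ℝ, |F a - F b| ≤ L * dist a b) (hL : 0 ≤ L)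
    (hg : |g| ≤ 4 * A) {a θ B : ℝ} (hθ : |incr F x m a - s * a| ≤ θ) (ho : |o a| ≤ B) :
    |graphErr F x m s g o a| ≤ (L + 4 * A) * B + θ := by
  have h1 : |F (x.1 + a, x.2 + m * a + o a) - F (x.1 + a, x.2 + m * a)| ≤ L * B := by
    apply F_lip_sub hF hL
    · simpa using (abs_nonneg _).trans ho
    · simpa using ho
  have h3 : |g * o a| ≤ 4 * A * B := by
    rw [abs_mul]; exact mul_le_mul hg ho (abs_nonneg _) ((abs_nonneg _).trans hg)
  have e : graphErr F x m s g o a = (F (x.1 + a, x.2 + m * a + o a) - F (x.1 + a, x.2 + m * a))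
    + (incr F x m a - s * a) - g * o a := by unfold graphErr incr; ring
  rw [e, abs_le]
  have h1 := abs_le.1 h1
  have h2 := abs_le.1 hθ
  have h3 := abs_le.1 h3
  constructor <;> linarith

set_option maxHeartbeats 1000000 in
/-- Control of the increments along the line of slope `m` through a point of the graph of `o`. -/
lemma graph_control (hF : ∀ a b : ℝ × ℝ, |F a - F b| ≤ L * dist a b) (hL : 0 ≤ L) (hA : 0 ≤ A)
    (hg : |g| ≤ 4 * A) (hm : |m| ≤ 1 / 2) (hκ0 : 0 < κ) (hκ : κ ≤ 1 / 16)
    (ho : ∀ a a', |o a - o a'| ≤ 2 * κ * |a - a'|) {R η θ ρ r τ B : ℝ} (hR : 0 < R)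
    (hη : 0 ≤ η) (hoR : |o R| ≤ 2 * η * R) (hoR' : |o (-R)| ≤ 2 * η * R) (hη2 : η ≤ κ)
    (hθ0 : 0 ≤ θ) (hθ : θ ≤ κ) (hρ : ∀ t, |t| ≤ ρ → |incr F x m t - s * t| ≤ θ * |t|)
    (hRρ : 4 * R ≤ ρ) (hRρ' : 8 * L * R ≤ κ * ρ)
    (hr1 : (L + 4 * A) * (4 * η * R) ≤ κ * r) (hr2 : 2 * θ * R ≤ κ * r)
    (hB : 0 ≤ B) (hτ : |τ| ≤ R - r) (hr : 0 ≤ r)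
    (hG : ∀ b, |b| ≤ R → |graphErr F x m s g o b - graphErr F x m s g o τ| ≤ B * |b - τ|)
    (t : ℝ) :
    |incr F (x.1 + τ, x.2 + m * τ + o τ) m t - incr F x m t|
      ≤ (B + (2 * L + 8 * A + 4) * κ) * |t| := by
  have ht := abs_nonneg t
  have hτR : |τ| ≤ R := by linarith
  have hBt : 0 ≤ B * |t| := by positivity
  have hLt : 0 ≤ L * κ * |t| := by positivity
  have hAt : 0 ≤ A * κ * |t| := by positivity
  have hκt : 0 ≤ κ * |t| := by positivity
  have hθt : θ * |t| ≤ κ * |t| := by gcongr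
  have hoτ : |o τ| ≤ R := by
    have h1 := ho τ R
    have h2 : |τ - R| ≤ 2 * R := by
      rw [abs_le] at hτR ⊢; constructor <;> linarith [hτR.1]
    have h3 : |o τ - o R| ≤ 2 * (1 / 16) * (2 * R) := h1.trans (by gcongr)
    have h4 : 2 * η * R ≤ 2 * (1 / 16) * R := by gcongr; linarith
    have := abs_sub_abs_le_abs_sub (o τ) (o R)
    linarith
  rcases le_or_gt |t| (ρ / 2) with hsm | hbig
  · have hx := abs_le.1 (hρ t (by linarith))
    rcases le_or_gt |τ + t| R with hin | hout
    · have h1 := hG (τ + t) hin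
      rw [add_sub_cancel_left] at h1
      have h2 := ho τ (τ + t)
      rw [show τ - (τ + t) = -t by ring, abs_neg] at h2
      have h3 : |F (x.1 + τ + t, x.2 + m * τ + o τ + m * t) -
          F (x.1 + (τ + t), x.2 + m * (τ + t) + o (τ + t))| ≤ L * (2 * κ * |t|) := by
        apply F_lip_sub hF hL
        · rw [← add_assoc, sub_self, abs_zero]; positivity
        · rwa [show x.2 + m * τ + o τ + m * t - (x.2 + m * (τ + t) + o (τ + t)) = o τ - o (τ + t)
            by ring]
      have h4 : |g * (o τ - o (τ + t))| ≤ 4 * A * (2 * κ * |t|) := by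
        rw [abs_mul]; exact mul_le_mul hg h2 (abs_nonneg _) (by positivity)
      have e : incr F (x.1 + τ, x.2 + m * τ + o τ) m t - incr F x m t =
          (F (x.1 + τ + t, x.2 + m * τ + o τ + m * t) -
          F (x.1 + (τ + t), x.2 + m * (τ + t) + o (τ + t)))
          + (graphErr F x m s g o (τ + t) - graphErr F x m s g o τ) - g * (o τ - o (τ + t))
          - (incr F x m t - s * t) := by unfold graphErr incr; ring
      rw [e, abs_le]
      have h1 := abs_le.1 h1
      have h3 := abs_le.1 h3
      have h4 := abs_le.1 h4
      constructor <;> linarith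
    · have hrt : r ≤ |t| := by
        have := abs_add_le τ t
        linarith
      have hr1' : (L + 4 * A) * (4 * η * R) ≤ κ * |t| := hr1.trans (by gcongr)
      have hr2' : 2 * θ * R ≤ κ * |t| := hr2.trans (by gcongr)
      obtain ⟨b, hbR, hob, hbt⟩ : ∃ b, |b| = R ∧ |o b| ≤ 2 * η * R ∧ |b - τ| ≤ |t| := by
        have hτ' := abs_le.1 hτR
        rcases lt_abs.1 hout with h | h
        · refine ⟨R, abs_of_pos hR, hoR, ?_⟩
          rw [abs_of_nonneg (by linarith)]
          exact (by linarith : R - τ ≤ t).trans (le_abs_self t)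
        · refine ⟨-R, by rw [abs_neg, abs_of_pos hR], hoR', ?_⟩
          rw [abs_of_nonpos (by linarith)]
          exact (by linarith : -(-R - τ) ≤ -t).trans (neg_le_abs t)
      have h1 : |graphErr F x m s g o b - graphErr F x m s g o τ| ≤ B * |t| :=
        (hG b hbR.le).trans (by gcongr)
      have h2 : |graphErr F x m s g o b| ≤ (L + 4 * A) * (2 * η * R) + θ * R := by
        have := hρ b (by rw [hbR]; linarith)
        rw [hbR] at this
        exact graphErr_small hF hL hg this hob
      have h3 : |o τ| ≤ 2 * η * R + 2 * κ * |t| := by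
        have h4 := ho b τ
        have h5 := abs_sub_abs_le_abs_sub (o τ) (o b)
        rw [abs_sub_comm] at h5
        have h6 : 2 * κ * |b - τ| ≤ 2 * κ * |t| := by gcongr
        linarith
      have h4 : |F (x.1 + τ + t, x.2 + m * τ + o τ + m * t) -
          F (x.1 + (τ + t), x.2 + m * (τ + t))| ≤ L * (2 * η * R + 2 * κ * |t|) := by
        apply F_lip_sub hF hL
        · rw [← add_assoc, sub_self, abs_zero]; positivity
        · rwa [show x.2 + m * τ + o τ + m * t - (x.2 + m * (τ + t)) = o τ by ring]
      have h5 : |g * o τ| ≤ 4 * A * (2 * η * R + 2 * κ * |t|) := by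
        rw [abs_mul]; exact mul_le_mul hg h3 (abs_nonneg _) (by positivity)
      have h6 := hρ (τ + t) ((abs_add_le _ _).trans (by linarith))
      have h7 : θ * |τ + t| ≤ θ * (R + |t|) := by
        gcongr
        exact (abs_add_le _ _).trans (by linarith)
      have e : incr F (x.1 + τ, x.2 + m * τ + o τ) m t - incr F x m t =
          (F (x.1 + τ + t, x.2 + m * τ + o τ + m * t) - F (x.1 + (τ + t), x.2 + m * (τ + t)))
          + (incr F x m (τ + t) - s * (τ + t)) - g * o τ
          + (graphErr F x m s g o b - graphErr F x m s g o τ) - graphErr F x m s g o b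
          - (incr F x m t - s * t) := by unfold graphErr incr; ring
      rw [e, abs_le]
      have h1 := abs_le.1 h1
      have h2 := abs_le.1 h2
      have h4 := abs_le.1 h4
      have h5 := abs_le.1 h5
      have h6 := abs_le.1 h6
      constructor <;> linarith
  · have hd : dist (x.1 + τ, x.2 + m * τ + o τ) x ≤ 2 * R := by
      rw [Prod.dist_eq, Real.dist_eq, Real.dist_eq]
      refine max_le ?_ ?_
      · simpa using hτR.trans (by linarith)
      · rw [show x.2 + m * τ + o τ - x.2 = m * τ + o τ by ring]
        refine (abs_add_le _ _).trans ?_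
        rw [abs_mul]
        have : |m| * |τ| ≤ 1 / 2 * R := by gcongr
        linarith
    refine (incr_base hF hL _ _ m t).trans ?_
    have h1 : 2 * L * dist (x.1 + τ, x.2 + m * τ + o τ) x ≤ 2 * L * (2 * R) := by gcongr
    have h2 : κ * ρ ≤ κ * (2 * |t|) := by gcongr; linarith
    linarith

end

/-- Every short segment near a point of `M l` can be approximated, relative to its length, by
segments contained in the larger set `M l'`. -/
def Wide (M : ℝ → Set (ℝ × ℝ)) (m0 : ℝ) : Prop :=
  ∀ l l' x, 0 ≤ l → l < l' → l' ≤ 1 → x ∈ M l → |x.1| < 1 / 4 → |x.2| < 1 / 4 → ∀ η > 0,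
    ∃ R0 > 0, ∀ R, 0 < R → R < R0 → ∀ μ α, |μ| < m0 → |α| ≤ 1 → ∃ μ' α', |μ'| < m0 ∧
      |μ' - μ| < η ∧ |α' - α| < η ∧ ∀ a, |a| ≤ R → (x.1 + a, x.2 + α' * R + μ' * a) ∈ M l'

/-- Differentiability tested on displacements `(ξ, m ξ + b)`, in the basis `(1, m)`, `(0, 1)`. -/
lemma differentiableAt_of_graph {F : ℝ × ℝ → ℝ} {x : ℝ × ℝ} {m s g : ℝ} (hm : |m| ≤ 1)
    (h : ∀ ε > 0, ∃ τ0 > 0, ∀ ξ b τ, |ξ| ≤ τ → |b| ≤ τ → 0 < τ → τ < τ0 →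
      |F (x.1 + ξ, x.2 + m * ξ + b) - F x - s * ξ - g * b| ≤ ε * τ) :
    DifferentiableAt ℝ F x := by
  refine HasFDerivAt.differentiableAt (f' := s • ContinuousLinearMap.fst ℝ ℝ ℝ +
    g • (ContinuousLinearMap.snd ℝ ℝ ℝ - m • ContinuousLinearMap.fst ℝ ℝ ℝ)) ?_
  rw [hasFDerivAt_iff_isLittleO_nhds_zero, Asymptotics.isLittleO_iff]
  intro ε hε
  obtain ⟨τ0, hτ0, hτ⟩ := h (ε / 2) (by positivity)
  rw [Metric.eventually_nhds_iff]
  refine ⟨τ0 / 2, by positivity, fun y hy => ?_⟩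
  rw [dist_zero_right] at hy
  rcases eq_or_ne y 0 with rfl | hy0
  · simp
  have hpos := norm_pos_iff.2 hy0
  have h1 : |y.1| ≤ ‖y‖ := norm_fst_le y
  have h2 : |y.2| ≤ ‖y‖ := norm_snd_le y
  have h3 : |m * y.1| ≤ 1 * ‖y‖ := by rw [abs_mul]; gcongr
  have := hτ y.1 (y.2 - m * y.1) (2 * ‖y‖) (by linarith)
    ((abs_sub _ _).trans (by linarith)) (by linarith) (by linarith)
  rw [show x.2 + m * y.1 + (y.2 - m * y.1) = x.2 + y.2 by ring] at this
  simp only [Real.norm_eq_abs, add_apply, smul_apply,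
    sub_apply, ContinuousLinearMap.coe_fst', ContinuousLinearMap.coe_snd',
    smul_eq_mul]
  rw [show x + y = (x.1 + y.1, x.2 + y.2) from rfl, ← sub_sub]
  linarith

/-- Where the graph of `o` is locally straight of slope `c`, a derivative `σ` of the approximation
error along it is a derivative of `F` in the direction `(1, m + c)`. -/
lemma trip_of_graph {F : ℝ × ℝ → ℝ} {x : ℝ × ℝ} {m s g c σ τ : ℝ} {o : ℝ → ℝ}
    (ho : ∀ᶠ t in 𝓝 (0:ℝ), o (τ + t) = o τ + c * t)
    (hd : HasDerivAt (graphErr F x m s g o) σ τ) :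
    Trip F (x.1 + τ, x.2 + m * τ + o τ) (m + c) (σ + s + g * c) := by
  have h1 : HasDerivAt (fun t => graphErr F x m s g o (τ + t)) σ 0 :=
    HasDerivAt.comp_const_add τ 0 (by simpa using hd)
  have h2 : HasDerivAt (fun t : ℝ => s * (τ + t) + g * (o τ + c * t)) (s + g * c) 0 := by
    have h3 : HasDerivAt (fun t : ℝ => (s + g * c) * t + (s * τ + g * o τ)) ((s + g * c) * 1) 0 :=
      ((hasDerivAt_id 0).const_mul _).add_const _
    rw [mul_one] at h3
    convert h3 using 2
    ring
  have h4 := (h1.add h2).sub_const (F (x.1 + τ, x.2 + m * τ + o τ) - F x)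
  rw [← add_assoc] at h4
  refine h4.congr_of_eventuallyEq ?_
  filter_upwards [ho] with t ht
  simp only [Pi.add_apply, graphErr, incr, ht]
  rw [show x.2 + m * τ + o τ + (m + c) * t = x.2 + m * (τ + t) + (o τ + c * t) by ring, add_assoc x.1]
  ring

set_option maxHeartbeats 2000000 in
/-- An extremal point is a point of differentiability, with derivative `s` along `(1, m)` and `g`
along `(0, 1)`: at a displacement where this fails, a two-segment curve through it contains a
point and a direction that beat the extremal triple. -/
theorem VP.Extremal.differentiableAt {p : VP} (hp : p.Good) (hW : Wide p.M p.m0)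
    {x : ℝ × ℝ} {l m s g : ℝ} (hx1 : |x.1| < 1 / 4) (hx2 : |x.2| < 1 / 4) (hl : 0 ≤ l)
    (hm : |m| ≤ p.m0 / 2)
    (h : p.Extremal (240 * √(3 * p.L + 4 * p.A) + 32 * (p.L + 4 * p.A + 1)) x l m s g) :
    DifferentiableAt ℝ p.F x := by
  have hL := hp.L_pos
  have hA := hp.A_pos
  have hm0 := hp.m0_pos
  have hm01 := hp.m0_le
  have hm2 : |m| ≤ 1 / 2 := by linarith
  have hs : |s| ≤ p.L := trip_le hp.lip hL.le (by linarith) h.trip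
  apply differentiableAt_of_graph (m := m) (s := s) (g := g) (by linarith)
  intro ε hε
  obtain ⟨κ, hκ0, hκ1, hκ2, hκ3, hκ4⟩ : ∃ κ > 0, κ ≤ 1 / 16 ∧ κ ≤ p.m0 / 8 ∧ κ ≤ ε ∧
      1024 * (p.A + 1) * κ ≤ ε := by
    refine ⟨min (min (1 / 16) (p.m0 / 8)) (min ε (ε / (1024 * (p.A + 1)))), by positivity,
      (min_le_left _ _).trans (min_le_left _ _), (min_le_left _ _).trans (min_le_right _ _),
      (min_le_right _ _).trans (min_le_left _ _), ?_⟩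
    rw [← le_div_iff₀' (by positivity)]
    exact (min_le_right _ _).trans (min_le_right _ _)
  set C := 3 * p.L + 4 * p.A with hC
  have hC0 : 0 < C := by positivity
  -- `mean_value` keeps the point `τ` at distance at least `γ R` from `±R`
  set γ := ε * κ / (32 * C) with hγ
  have hγ0 : 0 < γ := by positivity
  obtain ⟨η, hη0, hη1, hη2, hη3⟩ : ∃ η > 0, η ≤ κ / 2 ∧ (p.L + 4 * p.A) * (2 * η) ≤ ε * κ / 32 ∧
      (p.L + 4 * p.A) * (4 * η) ≤ κ * γ := by
    refine ⟨min (κ / 2) (min (ε * κ / 32 / (2 * (p.L + 4 * p.A))) (κ * γ / (4 * (p.L + 4 * p.A)))),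
      by positivity, min_le_left _ _, ?_, ?_⟩
    · rw [show ∀ y : ℝ, (p.L + 4 * p.A) * (2 * y) = (2 * (p.L + 4 * p.A)) * y by intro y; ring,
        ← le_div_iff₀' (by positivity)]
      exact (min_le_right _ _).trans (min_le_left _ _)
    · rw [show ∀ y : ℝ, (p.L + 4 * p.A) * (4 * y) = (4 * (p.L + 4 * p.A)) * y by intro y; ring,
        ← le_div_iff₀' (by positivity)]
      exact (min_le_right _ _).trans (min_le_right _ _)
  obtain ⟨θ, hθ0, hθ1, hθ2, hθ3⟩ : ∃ θ > 0, θ ≤ κ ∧ θ ≤ ε * κ / 32 ∧ 2 * θ ≤ κ * γ := by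
    refine ⟨min κ (min (ε * κ / 32) (κ * γ / 2)), by positivity, min_le_left _ _,
      (min_le_right _ _).trans (min_le_left _ _), ?_⟩
    rw [← le_div_iff₀' (by positivity)]
    exact (min_le_right _ _).trans (min_le_right _ _)
  obtain ⟨ρ, hρ0, hρ⟩ := trip_control h.trip hθ0
  obtain ⟨δ, hδ0, l', hll, hl1, hext⟩ := h.ext (ε * κ / 64) (by positivity)
  obtain ⟨R0, hR00, hR0⟩ := hW l l' x hl hll hl1 h.mem hx1 hx2 η hη0
  obtain ⟨R1, hR10, hR1R0, hR1ρ, hR1L, hR1δ⟩ : ∃ R1 > 0, R1 ≤ R0 ∧ 4 * R1 ≤ ρ ∧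
      8 * p.L * R1 ≤ κ * ρ ∧ 2 * R1 ≤ δ := by
    refine ⟨min (min R0 (ρ / 4)) (min (κ * ρ / (8 * p.L)) (δ / 2)), by positivity,
      (min_le_left _ _).trans (min_le_left _ _), ?_, ?_, ?_⟩
    · rw [← le_div_iff₀' (by positivity)]
      exact (min_le_left _ _).trans (min_le_right _ _)
    · rw [← le_div_iff₀' (by positivity)]
      exact (min_le_right _ _).trans (min_le_left _ _)
    · rw [← le_div_iff₀' (by positivity)]
      exact (min_le_right _ _).trans (min_le_right _ _)
  refine ⟨κ * R1, by positivity, fun ξ b τ' hξ hb hτ' hτR => ?_⟩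
  by_contra! hbad
  obtain ⟨R, rfl⟩ : ∃ R, τ' = κ * R := ⟨τ' / κ, by field_simp⟩
  have hR : 0 < R := pos_of_mul_pos_right hτ' hκ0.le
  have hRR1 : R < R1 := lt_of_mul_lt_mul_left hτR hκ0.le
  have hξ16 : |ξ| ≤ R / 16 := hξ.trans (by nlinarith)
  have hξ' := abs_le.1 hξ16
  have hp1 : 0 < R + ξ := by linarith
  have hp2 : 0 < R - ξ := by linarith
  have hS1b : |b / (R + ξ)| ≤ 16 / 15 * κ := by
    rw [abs_div, abs_of_pos hp1, div_le_iff₀ hp1]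
    nlinarith
  have hS2b : |b / (R - ξ)| ≤ 16 / 15 * κ := by
    rw [abs_div, abs_of_pos hp2, div_le_iff₀ hp2]
    nlinarith
  obtain ⟨μ1, α1, hμ1, hμ1', hα1, hin1⟩ := hR0 R hR (by linarith) (m + b / (R + ξ)) (b / (R + ξ))
    ((abs_add_le _ _).trans_lt (by linarith)) (by linarith)
  obtain ⟨μ2, α2, hμ2, hμ2', hα2, hin2⟩ := hR0 R hR (by linarith) (m - b / (R - ξ)) (b / (R - ξ))
    ((abs_sub _ _).trans_lt (by linarith)) (by linarith)
  obtain ⟨o, ho, hoR, hoR', hoξ, N, hN, hNo⟩ := tent_curve (c1 := μ1 - m) (e1 := α1 * R)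
    (c2 := μ2 - m) (e2 := α2 * R) hR hκ0 hη1 hξ16 hb
    (by rw [sub_sub]; exact hμ1'.le)
    (by rw [← sub_mul, abs_mul, abs_of_pos hR]; gcongr)
    (by rw [show μ2 - m + b / (R - ξ) = μ2 - (m - b / (R - ξ)) by ring]; exact hμ2'.le)
    (by rw [← sub_mul, abs_mul, abs_of_pos hR]; gcongr)
  set G := graphErr p.F x m s g o with hGdef
  have hGlip := graphErr_lip (x := x) hp.lip hL.le hA.le hs h.g_le hm2 hκ1 ho
  have hρR : ∀ a, |a| = R → |incr p.F x m a - s * a| ≤ θ * R := fun a ha => by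
    rw [← ha]; exact hρ a (by rw [ha]; linarith)
  set H := ε * κ * R / 2 with hH
  have hH0 : 0 < H := by positivity
  have hηR : (p.L + 4 * p.A) * (2 * η * R) ≤ ε * κ / 32 * R := by
    rw [← mul_assoc]; gcongr
  have hθR : θ * R ≤ ε * κ / 32 * R := by gcongr
  have hGR : |G R| ≤ H / 8 := (graphErr_small hp.lip hL.le h.g_le (hρR R (abs_of_pos hR)) hoR).trans
    (by rw [hH]; linarith)
  have hGR' : |G (-R)| ≤ H / 8 := (graphErr_small hp.lip hL.le h.g_le
    (hρR (-R) (by rw [abs_neg, abs_of_pos hR])) hoR').trans (by rw [hH]; linarith)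
  have hGξ : H ≤ |G ξ| := by
    have h1 : |p.F (x.1 + ξ, x.2 + m * ξ + o ξ) - p.F (x.1 + ξ, x.2 + m * ξ + b)|
        ≤ p.L * (2 * η * R) := by
      apply F_lip_sub hp.lip hL.le
      · simp; positivity
      · rwa [add_sub_add_left_eq_sub]
    have h2 : |g * (o ξ - b)| ≤ 4 * p.A * (2 * η * R) := by
      rw [abs_mul]; exact mul_le_mul h.g_le hoξ (abs_nonneg _) (by positivity)
    have e : p.F (x.1 + ξ, x.2 + m * ξ + b) - p.F x - s * ξ - g * b = G ξ
      - (p.F (x.1 + ξ, x.2 + m * ξ + o ξ) - p.F (x.1 + ξ, x.2 + m * ξ + b)) + g * (o ξ - b) := by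
      rw [hGdef]; unfold graphErr; ring
    rw [e] at hbad
    have h3 := abs_add_le (G ξ - (p.F (x.1 + ξ, x.2 + m * ξ + o ξ)
      - p.F (x.1 + ξ, x.2 + m * ξ + b))) (g * (o ξ - b))
    have h4 := abs_sub (G ξ) (p.F (x.1 + ξ, x.2 + m * ξ + o ξ) - p.F (x.1 + ξ, x.2 + m * ξ + b))
    rw [hH]
    have : 0 < ε * κ * R := by positivity
    linarith
  obtain ⟨τ, σ, hτN, hτ, hσd, hσ, hGτ⟩ := mean_value hC0 hGlip hR hH0 (by linarith) hGR hGR' hGξ hN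
  have hgap : H / (16 * C) = γ * R := by rw [hH, hγ]; field_simp; ring
  rw [hgap] at hτ
  have hσ' : ε * κ / 32 ≤ σ := by
    have e : H / (16 * R) = ε * κ / 32 := by rw [hH]; field_simp; ring
    rwa [e] at hσ
  have hγR : 0 < γ * R := by positivity
  have hτR : |τ| ≤ R := by linarith
  have hoτ : |o τ| ≤ R := by
    have h1 := ho τ R
    have h2 : |τ - R| ≤ 2 * R := by
      rw [abs_le] at hτR ⊢; constructor <;> linarith [hτR.1]
    have h3 : |o τ - o R| ≤ 2 * (1 / 16) * (2 * R) := h1.trans (by gcongr)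
    have h4 : 2 * η * R ≤ 2 * (1 / 16) * R := by gcongr; linarith
    have := abs_sub_abs_le_abs_sub (o τ) (o R)
    linarith
  have hctrl := graph_control (x := x) hp.lip hL.le hA.le h.g_le hm2 hκ0 hκ1 ho hR hη0.le hoR hoR'
    (by linarith) hθ0.le hθ1 hρ (by linarith)
    ((by gcongr : 8 * p.L * R ≤ 8 * p.L * R1).trans hR1L)
    (show (p.L + 4 * p.A) * (4 * η * R) ≤ κ * (γ * R) by
      rw [← mul_assoc (p.L + 4 * p.A), ← mul_assoc κ γ R]; gcongr) (by rw [← mul_assoc κ γ R]; gcongr)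
    (by positivity) hτ hγR.le hGτ
  -- both branches of the curve give a competitor contradicting extremality
  have main : ∀ c, |c| ≤ 2 * κ → |m + c| < p.m0 →
      (x.1 + τ, x.2 + m * τ + o τ) ∈ p.M l' → (∀ᶠ t in 𝓝 (0:ℝ), o (τ + t) = o τ + c * t) →
      False := by
    intro c hc hmc hz hoc
    have htr := trip_of_graph hoc hσd
    have hD : σ / 2 ≤ σ + s + g * c - s - g * c - p.A * c ^ 2 := by
      have h1 : c ^ 2 ≤ (2 * κ) ^ 2 := sq_le_sq' (abs_le.1 hc).1 (abs_le.1 hc).2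
      have h2 : p.A * c ^ 2 ≤ p.A * (2 * κ) ^ 2 := by gcongr
      have h3 : 1024 * (p.A + 1) * κ * κ ≤ ε * κ := by gcongr
      have h4 : 0 < κ * κ := by positivity
      have h5 : 0 < p.A * (κ * κ) := by positivity
      linarith
    set D := σ + s + g * c - s - g * c - p.A * c ^ 2 with hDdef
    have hD1 : ε * κ / 64 ≤ D := by linarith
    have hD2 : √σ ≤ 2 * √D := by
      rw [show (2:ℝ) = √4 by rw [show (4:ℝ) = 2 ^ 2 by norm_num]; simp, ← Real.sqrt_mul (by norm_num)]
      apply Real.sqrt_le_sqrt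
      have : 0 < ε * κ := by positivity
      linarith
    have hD3 : κ ≤ 8 * √D := by
      have : κ / 8 ≤ √D := by
        apply Real.le_sqrt_of_sq_le
        have : κ * κ ≤ ε * κ := by gcongr
        linarith
      linarith
    refine hext _ c _ hz ?_ hmc.le htr hD1 fun t => (hctrl t).trans ?_
    · rw [Prod.dist_eq, Real.dist_eq, Real.dist_eq]
      refine max_lt ?_ ?_
      · rw [add_sub_cancel_left]; linarith
      · rw [show x.2 + m * τ + o τ - x.2 = m * τ + o τ by ring]
        refine (abs_add_le _ _).trans_lt ?_
        rw [abs_mul]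
        have : |m| * |τ| ≤ 1 / 2 * R := by gcongr
        linarith
    · refine mul_le_mul_of_nonneg_right ?_ (abs_nonneg t)
      have h1 : 120 * √C * √σ ≤ 120 * √C * (2 * √D) := by gcongr
      have h2 : (2 * p.L + 8 * p.A + 4) * κ ≤ (2 * p.L + 8 * p.A + 4) * (8 * √D) := by gcongr
      have h3 : 0 ≤ √D := Real.sqrt_nonneg _
      have h4 : 0 ≤ p.L * √D := by positivity
      have h5 : 0 ≤ p.A * √D := by positivity
      linarith
  rcases hNo τ hτN with ⟨h1, h2⟩ | ⟨h1, h2⟩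
  · refine main _ ?_ (by rw [add_sub_cancel]; exact hμ1) ?_ h2
    · have h3 := abs_add_le (μ1 - (m + b / (R + ξ))) (b / (R + ξ))
      rw [show μ1 - (m + b / (R + ξ)) + b / (R + ξ) = μ1 - m by ring] at h3
      linarith
    · convert hin1 τ hτR using 2
      rw [h1]; ring
  · refine main _ ?_ (by rw [add_sub_cancel]; exact hμ2) ?_ h2
    · have h3 := abs_sub (μ2 - (m - b / (R - ξ))) (b / (R - ξ))
      rw [show μ2 - (m - b / (R - ξ)) - b / (R - ξ) = μ2 - m by ring] at h3
      linarith
    · convert hin2 τ hτR using 2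
      rw [h1]; ring

/-! ### Nested neighbourhoods of lines -/

/-- The Cantor-type sets built from the lines `a ↦ α + m a`, `(m, α) = ℓ i`: at every scale `k`,
a point of level `t` lies within `t * w n` of one of the first `N n` lines, for some `n` between
`k` and `(1 + t) k`. -/
def nest (ℓ : ℕ → ℝ × ℝ) (N : ℕ → ℕ) (w : ℕ → ℝ) (t : ℝ) : Set (ℝ × ℝ) :=
  {z | |z.1| ≤ 1 / 4 ∧ |z.2| ≤ 1 / 4 ∧ ∀ k : ℕ, 1 ≤ k → ∃ n : ℕ, k ≤ n ∧ (n : ℝ) ≤ (1 + t) * k ∧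
    ∃ i < N n, |z.2 - (ℓ i).2 - (ℓ i).1 * z.1| ≤ t * w n}

section
variable {ℓ : ℕ → ℝ × ℝ} {N : ℕ → ℕ} {w : ℕ → ℝ}

lemma nest_mono (hw : ∀ n, 0 < w n) : Monotone (nest ℓ N w) := by
  rintro t t' htt z ⟨h1, h2, h⟩
  refine ⟨h1, h2, fun k hk => ?_⟩
  obtain ⟨n, hkn, hn, i, hi, hz⟩ := h k hk
  have := (hw n).le
  exact ⟨n, hkn, hn.trans (by gcongr), i, hi, hz.trans (by gcongr)⟩

lemma nest_closed (t : ℝ) : IsClosed (nest ℓ N w t) := by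
  have e : nest ℓ N w t = {z | |z.1| ≤ 1 / 4} ∩ ({z | |z.2| ≤ 1 / 4} ∩ ⋂ k : ℕ, ⋂ _ : 1 ≤ k,
      ⋃ n ∈ {n : ℕ | k ≤ n ∧ (n : ℝ) ≤ (1 + t) * k}, ⋃ i ∈ {i | i < N n},
        {z : ℝ × ℝ | |z.2 - (ℓ i).2 - (ℓ i).1 * z.1| ≤ t * w n}) := by
    ext z
    simp [nest, and_assoc]
  rw [e]
  refine (isClosed_le (by fun_prop) (by fun_prop)).inter
    ((isClosed_le (by fun_prop) (by fun_prop)).inter ?_)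
  refine isClosed_iInter fun k => isClosed_iInter fun _ => ?_
  refine Set.Finite.isClosed_biUnion ?_ fun n _ => ?_
  · refine (Set.finite_Iic ⌊(1 + t) * k⌋₊).subset fun n hn => ?_
    exact Nat.le_floor hn.2
  · refine Set.Finite.isClosed_biUnion (Set.finite_Iio (N n)) fun i _ => ?_
    exact isClosed_le (by fun_prop) (by fun_prop)

set_option maxHeartbeats 1000000 in
/-- If the first `N (n + 1)` lines form a fine net relative to `w n`, the sets `nest` are wide: a
short segment near `x` lies close to a line of the net, which serves all fine scales, while at the
coarse scales the conditions for `x` still hold with the larger width `l' * w n`. The slack between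
`(1 + l) * k` and `(1 + l') * k` closes the gap between coarse and fine scales. -/
lemma nest_wide {m0 : ℝ} (hm0 : m0 ≤ 1) (hw : ∀ n, 0 < w n)
    (hw2 : ∀ n, w (n + 1) ≤ w n / 2) (hN : Monotone N) (hℓ : ∀ i, |(ℓ i).1| < m0)
    (hnet : ∀ n : ℕ, ∀ m α : ℝ, |m| ≤ m0 → |α| ≤ 2 →
      ∃ i < N (n + 1), |(ℓ i).1 - m| ≤ w n / (n + 1) ∧ |(ℓ i).2 - α| ≤ w n / (n + 1)) :
    Wide (nest ℓ N w) m0 := by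
  intro l l' x hl hll hl1 hx hx1 hx2 η0 hη0
  obtain ⟨-, -, hx⟩ := hx
  obtain ⟨η, hη, hη1, hηη⟩ : ∃ η > 0, η ≤ 1 ∧ η ≤ η0 :=
    ⟨min η0 1, by positivity, min_le_right _ _, min_le_left _ _⟩
  set Δ := l' - l with hΔ
  have hΔ0 : 0 < Δ := sub_pos.2 hll
  have hanti : Antitone w := antitone_nat_of_succ_le fun n => (hw2 n).trans (by linarith [hw n])
  have hwlim : ∀ n, w n ≤ w 0 * (1 / 2) ^ n := by
    intro n
    induction n with
    | zero => simp
    | succ n ih => rw [pow_succ]; linarith [hw2 n]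
  obtain ⟨N0, hN0⟩ := exists_nat_gt (max (2 / Δ) (16 / (Δ * η)))
  have hN01 : 2 / Δ < N0 := (le_max_left _ _).trans_lt hN0
  have hN02 : 16 / (Δ * η) < N0 := (le_max_right _ _).trans_lt hN0
  rw [div_lt_iff₀ (by positivity)] at hN01 hN02
  have hwN0 := hw N0
  obtain ⟨R0, hR0, hR1, hR2, hR3, hR4⟩ : ∃ R0 > 0, R0 ≤ 1 ∧ 8 * R0 ≤ Δ * w N0 ∧
      3 * R0 ≤ 1 / 4 - |x.1| ∧ 3 * R0 ≤ 1 / 4 - |x.2| := by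
    have := sub_pos.2 hx1
    have := sub_pos.2 hx2
    refine ⟨min (min 1 (Δ * w N0 / 8)) (min ((1 / 4 - |x.1|) / 3) ((1 / 4 - |x.2|) / 3)),
      by positivity, (min_le_left _ _).trans (min_le_left _ _), ?_, ?_, ?_⟩
    · rw [← le_div_iff₀' (by positivity)]
      exact (min_le_left _ _).trans (min_le_right _ _)
    · rw [← le_div_iff₀' (by positivity)]
      exact (min_le_right _ _).trans (min_le_left _ _)
    · rw [← le_div_iff₀' (by positivity)]
      exact (min_le_right _ _).trans (min_le_right _ _)
  refine ⟨R0, hR0, fun R hR hRR μ α hμ hα => ?_⟩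
  -- `n1` is the last scale at which a displacement of order `R` goes unnoticed
  obtain ⟨n1, hn1, hn2⟩ : ∃ n1, (∀ n ≤ n1, 8 * R ≤ Δ * w n) ∧ Δ * w (n1 + 1) < 8 * R := by
    have hex : ∃ n, Δ * w n < 8 * R := by
      obtain ⟨n, hn⟩ := exists_pow_lt_of_lt_one (show 0 < 8 * R / (Δ * w 0) by
        have := hw 0; positivity) (show (1 / 2 : ℝ) < 1 by norm_num)
      refine ⟨n, ?_⟩
      have h0 := hw 0
      rw [lt_div_iff₀ (by positivity)] at hn
      have := mul_le_mul_of_nonneg_left (hwlim n) hΔ0.le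
      linarith
    classical
    obtain ⟨n1, hn1⟩ : ∃ n1, Nat.find hex = n1 + 1 := by
      refine Nat.exists_eq_succ_of_ne_zero fun h0 => ?_
      have h1 := Nat.find_spec hex
      rw [h0] at h1
      have h2 : Δ * w N0 ≤ Δ * w 0 := by gcongr; exact hanti (Nat.zero_le _)
      linarith
    refine ⟨n1, fun n hn => ?_, hn1 ▸ Nat.find_spec hex⟩
    exact not_lt.1 (Nat.find_min hex (by omega))
  have hN0n : N0 ≤ n1 := by
    by_contra! hlt
    have h2 : Δ * w N0 ≤ Δ * w (n1 + 1) := by gcongr; exact hanti hlt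
    linarith
  have hN0n' : (N0 : ℝ) ≤ n1 := by exact_mod_cast hN0n
  have hx1' := abs_lt.1 hx1
  have hx2' := abs_lt.1 hx2
  obtain ⟨i, hi, him, hia⟩ := hnet (n1 + 1) μ (x.2 + α * R - μ * x.1) hμ.le (by
    have h1 : |α * R| ≤ 1 * 1 := by rw [abs_mul, abs_of_pos hR]; gcongr; linarith
    have h2 : |μ * x.1| ≤ 1 * (1 / 4) := by rw [abs_mul]; gcongr; linarith
    have := abs_sub (x.2 + α * R) (μ * x.1)
    have := abs_add_le x.2 (α * R)
    linarith)
  set v := w (n1 + 1) / ((n1 + 1 : ℕ) + 1 : ℝ) with hv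
  have hv2 : 2 * v < η * R := by
    have h1 : (0:ℝ) < (n1 + 1 : ℕ) + 1 := by positivity
    have h2 : v * ((n1 + 1 : ℕ) + 1) = w (n1 + 1) := div_mul_cancel₀ _ h1.ne'
    have h3 : 16 < ((n1 + 1 : ℕ) + 1 : ℝ) * (Δ * η) := by
      push_cast
      have : (N0:ℝ) * (Δ * η) ≤ (n1 + 1 + 1) * (Δ * η) := by gcongr; linarith
      linarith
    have h4 : 2 * v * (Δ * ((n1 + 1 : ℕ) + 1)) < 16 * R := by
      rw [show 2 * v * (Δ * ((n1 + 1 : ℕ) + 1)) = 2 * (Δ * (v * ((n1 + 1 : ℕ) + 1))) by ring, h2]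
      linarith
    have h5 : 16 * R < η * R * (Δ * ((n1 + 1 : ℕ) + 1)) := by
      have := mul_lt_mul_of_pos_right h3 hR
      linarith
    exact lt_of_mul_lt_mul_right (h4.trans h5) (by positivity)
  have hv0 : 0 < v := by have := hw (n1 + 1); positivity
  set α' := ((ℓ i).2 + (ℓ i).1 * x.1 - x.2) / R with hα'
  have hα'R : α' * R = (ℓ i).2 + (ℓ i).1 * x.1 - x.2 := div_mul_cancel₀ _ hR.ne'
  have hαα : |α' - α| < η := by
    have h1 : (α' - α) * R = ((ℓ i).2 - (x.2 + α * R - μ * x.1)) + ((ℓ i).1 - μ) * x.1 := by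
      rw [sub_mul, hα'R]; ring
    have h2 : |((ℓ i).1 - μ) * x.1| ≤ v * 1 := by rw [abs_mul]; gcongr; linarith
    have h3 : |α' - α| * R < η * R := by
      rw [← abs_of_pos hR, ← abs_mul, abs_of_pos hR, h1]
      exact (abs_add_le _ _).trans_lt (by linarith)
    exact lt_of_mul_lt_mul_right h3 hR.le
  have hR1' : η * R ≤ η := by nlinarith
  refine ⟨(ℓ i).1, α', hℓ i, by linarith, by linarith, fun a ha => ?_⟩
  have hα2 : |α'| ≤ 2 := by
    have := abs_add_le (α' - α) α
    rw [sub_add_cancel] at this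
    linarith
  have hmv : |α' * R + (ℓ i).1 * a| ≤ 3 * R := by
    have h1 : |α' * R| ≤ 2 * R := by rw [abs_mul, abs_of_pos hR]; gcongr
    have h2 : |(ℓ i).1 * a| ≤ 1 * R := by rw [abs_mul]; gcongr; linarith [hℓ i]
    exact (abs_add_le _ _).trans (by linarith)
  have hline : x.2 + α' * R + (ℓ i).1 * a - (ℓ i).2 - (ℓ i).1 * (x.1 + a) = 0 := by
    rw [hα'R]; ring
  refine ⟨(abs_add_le _ _).trans (by linarith), ?_, fun k hk => ?_⟩
  · show |x.2 + α' * R + (ℓ i).1 * a| ≤ _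
    rw [add_assoc]
    exact (abs_add_le _ _).trans (by linarith)
  obtain ⟨n, hkn, hn, j, hj, hxj⟩ := hx k hk
  rcases le_or_gt n n1 with hnn | hnn
  · refine ⟨n, hkn, hn.trans (by gcongr), j, hj, ?_⟩
    show |x.2 + α' * R + (ℓ i).1 * a - (ℓ j).2 - (ℓ j).1 * (x.1 + a)| ≤ _
    have h1 : |(ℓ j).1 * a| ≤ 1 * R := by rw [abs_mul]; gcongr; linarith [hℓ j]
    have h2 := hn1 n hnn
    have h3 := abs_add_le (x.2 - (ℓ j).2 - (ℓ j).1 * x.1) (α' * R + (ℓ i).1 * a)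
    have h4 := abs_sub (x.2 - (ℓ j).2 - (ℓ j).1 * x.1 + (α' * R + (ℓ i).1 * a)) ((ℓ j).1 * a)
    rw [show x.2 + α' * R + (ℓ i).1 * a - (ℓ j).2 - (ℓ j).1 * (x.1 + a) =
      x.2 - (ℓ j).2 - (ℓ j).1 * x.1 + (α' * R + (ℓ i).1 * a) - (ℓ j).1 * a by ring]
    have h5 : l' * w n = l * w n + Δ * w n := by rw [hΔ]; ring
    linarith
  · have hpos : ∀ n, 0 ≤ l' * w n := fun n => mul_nonneg (hl.trans hll.le) (hw n).le
    rcases le_or_gt (n1 + 2) k with hk2 | hk2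
    · refine ⟨k, le_rfl, ?_, i, hi.trans_le (hN hk2), ?_⟩
      · have : (0:ℝ) ≤ k := by positivity
        nlinarith
      · show |x.2 + α' * R + (ℓ i).1 * a - (ℓ i).2 - (ℓ i).1 * (x.1 + a)| ≤ _
        rw [hline, abs_zero]; exact hpos k
    · refine ⟨n1 + 2, by omega, ?_, i, hi, ?_⟩
      · have h1 : ((n1 + 1 : ℕ) : ℝ) ≤ n := by exact_mod_cast hnn
        push_cast at h1 ⊢
        have hk0 : (0:ℝ) ≤ k := by positivity
        have h2 : (1 + l) * k ≤ 2 * k := by gcongr; linarith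
        have h3 : Δ * N0 ≤ Δ * (2 * k) := by gcongr; linarith
        have h4 : (1 + l') * k = (1 + l) * k + Δ * k := by rw [hΔ]; ring
        linarith
      · show |x.2 + α' * R + (ℓ i).1 * a - (ℓ i).2 - (ℓ i).1 * (x.1 + a)| ≤ _
        rw [hline, abs_zero]; exact hpos _

end

lemma seg_nhds {V : Set (ℝ × ℝ)} (hV : IsOpen V) {p : ℝ × ℝ}
    (h : ∀ a, |a| ≤ 1 / 4 → (a, p.2 + p.1 * a) ∈ V) :
    ∃ δ > 0, ∀ a y, |a| ≤ 1 / 4 → |y - p.2 - p.1 * a| < δ → (a, y) ∈ V := by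
  have hK : IsCompact ((fun a : ℝ => (a, p.2 + p.1 * a)) '' closedBall 0 (1 / 4)) :=
    (isCompact_closedBall 0 _).image (by fun_prop)
  obtain ⟨δ, hδ, hsub⟩ := hK.exists_thickening_subset_open hV (by
    rintro _ ⟨a, ha, rfl⟩
    exact h a (by simpa using ha))
  refine ⟨δ, hδ, fun a y ha hy => hsub ?_⟩
  rw [mem_thickening_iff]
  refine ⟨_, ⟨a, by simpa using ha, rfl⟩, ?_⟩
  rw [Prod.dist_eq, Real.dist_eq, Real.dist_eq]
  refine max_lt (by simpa using hδ) ?_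
  rwa [← sub_sub]

lemma seg_nhds_finite {V : Set (ℝ × ℝ)} (hV : IsOpen V) {ℓ : ℕ → ℝ × ℝ}
    (h : ∀ i a, |a| ≤ 1 / 4 → (a, (ℓ i).2 + (ℓ i).1 * a) ∈ V) (N : ℕ) :
    ∃ w > 0, ∀ i < N, ∀ a y, |a| ≤ 1 / 4 → |y - (ℓ i).2 - (ℓ i).1 * a| ≤ w → (a, y) ∈ V := by
  induction N with
  | zero => exact ⟨1, one_pos, by simp⟩
  | succ N ih =>
    obtain ⟨w, hw, H⟩ := ih
    obtain ⟨δ, hδ, H'⟩ := seg_nhds hV (h N)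
    refine ⟨min w (δ / 2), by positivity, fun i hi a y ha hy => ?_⟩
    rcases Nat.lt_succ_iff_lt_or_eq.1 hi with hi | rfl
    · exact H i hi a y ha (hy.trans (min_le_left _ _))
    · exact H' a y ha ((hy.trans (min_le_right _ _)).trans_lt (by linarith))

/-- Finitely many terms of a dense sequence form a net of a compact set. -/
lemma exists_net {K : Set (ℝ × ℝ)} (hK : IsCompact K) {ℓ : ℕ → ℝ × ℝ}
    (h : K ⊆ closure (range ℓ)) {δ : ℝ} (hδ : 0 < δ) :
    ∃ N, ∀ p ∈ K, ∃ i < N, dist (ℓ i) p < δ := by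
  obtain ⟨N, hN⟩ := hK.elim_directed_cover (fun N : ℕ => ⋃ i ∈ {i | i < N}, ball (ℓ i) δ)
    (fun N => isOpen_biUnion fun _ _ => isOpen_ball) (fun p hp => by
      obtain ⟨_, ⟨i, rfl⟩, hi⟩ := Metric.mem_closure_iff.1 (h hp) δ hδ
      exact mem_iUnion.2 ⟨i + 1, mem_biUnion (show i < i + 1 by omega) hi⟩)
    (Monotone.directed_le fun N N' hNN => biUnion_subset_biUnion_left fun i hi =>
      lt_of_lt_of_le hi hNN)
  refine ⟨N, fun p hp => ?_⟩
  obtain ⟨i, hi, hp⟩ := mem_iUnion₂.1 (hN hp)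
  exact ⟨i, hi, by rwa [dist_comm]⟩

lemma slope_closure {m0 : ℝ} (hm0 : 0 < m0) {p : ℝ × ℝ} (hp : |p.1| ≤ m0) :
    p ∈ closure {p : ℝ × ℝ | |p.1| < m0} := by
  have : {p : ℝ × ℝ | |p.1| < m0} = ball 0 m0 ×ˢ univ := by ext; simp
  rw [this, closure_prod_eq, closure_ball _ hm0.ne']
  simpa using hp

/-- If the lines lying in all the `U n` over `[-1/4, 1/4]` are dense, there are such lines `ℓ i`,
numbers `N n` and widths `w n` satisfying the net condition of `nest_wide`, with `nest ℓ N w 1`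
contained in `⋂ n, U n`. The width `w n` is chosen so that the `w n`-neighbourhoods of the first
`N n` lines lie in `U n`, and then `N (n + 1)` by compactness. The line `ℓ 0` passes near the origin
with small slope. -/
theorem exists_nest {U : ℕ → Set (ℝ × ℝ)} (hU : ∀ n, IsOpen (U n)) (hanti : Antitone U) {m0 : ℝ}
    (hm0 : 0 < m0) (𝓛 : Set (ℝ × ℝ)) (h𝓛 : ∀ p ∈ 𝓛, |p.1| < m0 ∧
      ∀ n a, |a| ≤ 1 / 4 → (a, p.2 + p.1 * a) ∈ U n)
    (hdense : {p : ℝ × ℝ | |p.1| < m0} ⊆ closure 𝓛) :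
    ∃ (ℓ : ℕ → ℝ × ℝ) (N : ℕ → ℕ) (w : ℕ → ℝ), (∀ n, 0 < w n) ∧ (∀ n, w (n + 1) ≤ w n / 2) ∧
      Monotone N ∧ 1 ≤ N 0 ∧ (∀ i, |(ℓ i).1| < m0) ∧ |(ℓ 0).1| < m0 / 8 ∧ |(ℓ 0).2| < 1 / 16 ∧
      (∀ n : ℕ, ∀ m α : ℝ, |m| ≤ m0 → |α| ≤ 2 →
        ∃ i < N (n + 1), |(ℓ i).1 - m| ≤ w n / (n + 1) ∧ |(ℓ i).2 - α| ≤ w n / (n + 1)) ∧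
      nest ℓ N w 1 ⊆ ⋂ n, U n := by
  obtain ⟨p0, hp0, hp01⟩ := Metric.mem_closure_iff.1
    (hdense (show ((0, 0) : ℝ × ℝ) ∈ {p : ℝ × ℝ | |p.1| < m0} by simpa using hm0))
    (min (m0 / 8) (1 / 16)) (by positivity)
  rw [dist_comm, Prod.dist_eq, Real.dist_eq, Real.dist_eq, sub_zero, sub_zero, max_lt_iff] at hp01
  have : Nonempty 𝓛 := ⟨⟨p0, hp0⟩⟩
  obtain ⟨u, hu⟩ := TopologicalSpace.exists_dense_seq 𝓛
  set ℓ : ℕ → ℝ × ℝ := fun i => Nat.casesOn i p0 (fun j => (u j : ℝ × ℝ)) with hℓdef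
  have hℓmem : ∀ i, ℓ i ∈ 𝓛 := by
    rintro (_ | j)
    · exact hp0
    · exact (u j).2
  have hrange : 𝓛 ⊆ closure (range ℓ) := by
    intro p hp
    rw [Metric.mem_closure_iff]
    intro ε hε
    obtain ⟨j, hj⟩ := hu.exists_dist_lt ⟨p, hp⟩ hε
    exact ⟨ℓ (j + 1), ⟨j + 1, rfl⟩, hj⟩
  set K : Set (ℝ × ℝ) := closedBall 0 m0 ×ˢ closedBall 0 2 with hK
  have hKc : IsCompact K := (isCompact_closedBall _ _).prod (isCompact_closedBall _ _)
  have hKr : K ⊆ closure (range ℓ) := by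
    intro p hp
    have h1 : |p.1| ≤ m0 := by simpa using hp.1
    have h2 : closure {p : ℝ × ℝ | |p.1| < m0} ⊆ closure (range ℓ) :=
      closure_minimal (hdense.trans (closure_minimal hrange isClosed_closure)) isClosed_closure
    exact h2 (slope_closure hm0 h1)
  let I : ℕ → ℕ × ℝ → Prop := fun n S => 1 ≤ S.1 ∧ 0 < S.2 ∧ ∀ i < S.1, ∀ a y, |a| ≤ 1 / 4 →
    |y - (ℓ i).2 - (ℓ i).1 * a| ≤ S.2 → (a, y) ∈ U n
  let Rl : ℕ → ℕ × ℝ → ℕ × ℝ → Prop := fun n S S' => S.1 ≤ S'.1 ∧ S'.2 ≤ S.2 / 2 ∧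
    ∀ p ∈ K, ∃ i < S'.1, dist (ℓ i) p < S.2 / (n + 1)
  have hseg := fun n => seg_nhds_finite (hU n) (fun i => (h𝓛 _ (hℓmem i)).2 n)
  obtain ⟨w0, hw0, hw0'⟩ := hseg 0 1
  obtain ⟨f, -, hf⟩ := exists_dependent_seq (I := I) (Rl := Rl) (a0 := (1, w0))
    ⟨le_rfl, hw0, hw0'⟩ (by
      rintro n ⟨N, w⟩ ⟨h1, h2, -⟩
      obtain ⟨N', hN'⟩ := exists_net hKc hKr (show 0 < w / (n + 1 : ℝ) from div_pos h2 (by positivity))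
      obtain ⟨w', hw', hw''⟩ := hseg (n + 1) (max N N')
      refine ⟨(max N N', min (w / 2) w'), ⟨h1.trans (le_max_left _ _), lt_min (half_pos h2) hw',
        fun i hi a y ha hy => hw'' i hi a y ha (hy.trans (min_le_right _ _))⟩,
        le_max_left _ _, min_le_left _ _, fun p hp => ?_⟩
      obtain ⟨i, hi, hd⟩ := hN' p hp
      exact ⟨i, hi.trans_le (le_max_right _ _), hd⟩)
  refine ⟨ℓ, fun n => (f n).1, fun n => (f n).2, fun n => (hf n).1.2.1, fun n => (hf n).2.2.1,
    monotone_nat_of_le_succ fun n => (hf n).2.1, (hf 0).1.1, fun i => (h𝓛 _ (hℓmem i)).1,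
    hp01.1.trans_le (min_le_left _ _), hp01.2.trans_le (min_le_right _ _), ?_, ?_⟩
  · intro n m α hm hα
    obtain ⟨i, hi, hd⟩ := (hf n).2.2.2 (m, α) ⟨by simpa using hm, by simpa using hα⟩
    rw [Prod.dist_eq, Real.dist_eq, Real.dist_eq, max_lt_iff] at hd
    exact ⟨i, hi, hd.1.le, hd.2.le⟩
  · rintro z ⟨hz1, -, hz⟩
    refine mem_iInter.2 fun n => ?_
    obtain ⟨k, hnk, -, i, hi, hzi⟩ := hz (n + 1) (by omega)
    refine hanti (show n ≤ k by omega) ?_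
    exact (hf k).1.2.2 i hi z.1 z.2 hz1 (by simpa using hzi)

/-- By Baire category, the lines contained near the origin in infinitely many of the given open
sets are dense. -/
lemma baire_lines {V : ℕ → Set (ℝ × ℝ)} (hV : ∀ k, IsOpen (V k)) {q : ℕ → ℝ × ℝ}
    (hq : ∀ k a, (a, (q k).2 + (q k).1 * a) ∈ V k) {m0 : ℝ}
    (hd : ∀ n, {p : ℝ × ℝ | |p.1| < m0} ⊆ closure (q '' Ici n)) :
    {p : ℝ × ℝ | |p.1| < m0} ⊆ closure {p : ℝ × ℝ | |p.1| < m0 ∧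
      ∀ n a, |a| ≤ 1 / 4 → (a, p.2 + p.1 * a) ∈ ⋃ k, ⋃ _ : n ≤ k, V k} := by
  set B := {p : ℝ × ℝ | |p.1| < m0} with hB
  have hBo : IsOpen B := isOpen_lt (by fun_prop) (by fun_prop)
  set W : ℕ → Set (ℝ × ℝ) := fun k => {p | ∀ a, |a| ≤ 1 / 4 → (a, p.2 + p.1 * a) ∈ V k} with hW
  have hWo : ∀ k, IsOpen (W k) := by
    intro k
    rw [Metric.isOpen_iff]
    intro p hp
    obtain ⟨δ, hδ, H⟩ := seg_nhds (hV k) hp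
    refine ⟨δ / 2, by positivity, fun p' hp' a ha => H a _ ha ?_⟩
    rw [mem_ball, Prod.dist_eq, Real.dist_eq, Real.dist_eq, max_lt_iff] at hp'
    have h1 : |(p'.1 - p.1) * a| ≤ δ / 2 * 1 := by
      rw [abs_mul]
      exact mul_le_mul hp'.1.le (by linarith) (abs_nonneg _) (by positivity)
    rw [show p'.2 + p'.1 * a - p.2 - p.1 * a = (p'.2 - p.2) + (p'.1 - p.1) * a by ring]
    exact (abs_add_le _ _).trans_lt (by linarith [hp'.2])
  set O : ℕ → Set (ℝ × ℝ) := fun n => (⋃ k, ⋃ _ : n ≤ k, W k) ∪ (closure B)ᶜ with hO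
  have hOo : ∀ n, IsOpen (O n) := fun n =>
    (isOpen_iUnion fun k => isOpen_iUnion fun _ => hWo k).union isClosed_closure.isOpen_compl
  have hOd : ∀ n, Dense (O n) := by
    intro n p
    by_cases hp : p ∈ closure B
    · have h1 : B ⊆ closure (O n) := (hd n).trans (closure_mono (by
        rintro _ ⟨k, hk, rfl⟩
        exact Or.inl (mem_iUnion₂.2 ⟨k, hk, fun a _ => hq k a⟩)))
      exact closure_minimal h1 isClosed_closure hp
    · exact subset_closure (Or.inr hp)
  refine ((dense_iInter_of_isOpen_nat hOo hOd).open_subset_closure_inter hBo).trans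
    (closure_mono ?_)
  rintro p ⟨hp, hpO⟩
  refine ⟨hp, fun n a ha => ?_⟩
  rcases mem_iInter.1 hpO n with h | h
  · obtain ⟨k, hk, h⟩ := mem_iUnion₂.1 h
    exact mem_iUnion₂.2 ⟨k, hk, h a ha⟩
  · exact absurd (subset_closure hp) h

/-! ### The result in coordinates -/

/-- A Lipschitz function has a derivative along some short portion of a line. -/
lemma exists_trip {F : ℝ × ℝ → ℝ} {L : ℝ} (hL : 0 ≤ L) (hF : ∀ a b, |F a - F b| ≤ L * dist a b)
    {m : ℝ} (hm : |m| ≤ 1) (α : ℝ) {r : ℝ} (hr : 0 < r) :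
    ∃ a s, |a| < r ∧ Trip F (a, α + m * a) m s := by
  have hlip : LipschitzWith (Real.toNNReal L) (fun a => F (a, α + m * a)) := by
    refine LipschitzWith.of_dist_le_mul fun a b => ?_
    rw [Real.coe_toNNReal _ hL, Real.dist_eq, Real.dist_eq]
    apply F_lip_sub hF hL le_rfl
    rw [show α + m * a - (α + m * b) = m * (a - b) by ring, abs_mul]
    exact mul_le_of_le_one_left (abs_nonneg _) hm
  obtain ⟨a, ha, hd⟩ := (Measure.dense_of_ae hlip.ae_differentiableAt_real).inter_open_nonempty
    (ball 0 r) isOpen_ball ⟨0, mem_ball_self hr⟩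
  replace hd : DifferentiableAt ℝ (fun a => F (a, α + m * a)) a := hd
  refine ⟨a, deriv (fun a => F (a, α + m * a)) a, by simpa using ha, ?_⟩
  have h1 : HasDerivAt (fun t => F (a + t, α + m * (a + t)))
      (deriv (fun a => F (a, α + m * a)) a) 0 :=
    HasDerivAt.comp_const_add (f := fun a => F (a, α + m * a)) a 0
      (by simpa using hd.hasDerivAt)
  have h2 := h1.sub_const (F (a, α + m * a))
  refine h2.congr_of_eventuallyEq (Eventually.of_forall fun t => ?_)
  simp only [incr]
  rw [mul_add, ← add_assoc]

/-- The statement in coordinates, for open neighbourhoods `V k` of the lines with slope and intercept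
`q k`. The penalty `β0` is chosen so that the slope changes by at most `m0 / 4` in total. -/
theorem planar {V : ℕ → Set (ℝ × ℝ)} (hV : ∀ k, IsOpen (V k)) {q : ℕ → ℝ × ℝ}
    (hq : ∀ k a, (a, (q k).2 + (q k).1 * a) ∈ V k) {m0 : ℝ} (hm0 : 0 < m0) (hm1 : m0 ≤ 1)
    (hd : ∀ n, {p : ℝ × ℝ | |p.1| < m0} ⊆ closure (q '' Ici n)) :
    ∃ D : Set (ℝ × ℝ), IsCompact D ∧ (∀ z ∈ D, |z.1| ≤ 1 / 4 ∧ |z.2| ≤ 1 / 4) ∧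
      (D ⊆ ⋂ n : ℕ, ⋃ k, ⋃ _ : n ≤ k, V k) ∧
      ∀ F : ℝ × ℝ → ℝ, (∃ K, LipschitzWith K F) → ∃ z ∈ D, DifferentiableAt ℝ F z := by
  obtain ⟨ℓ, N, w, hw, hw2, hN, hN0, hℓ, hℓ0, hℓ0', hnet, hsub⟩ := exists_nest
    (U := fun n => ⋃ k, ⋃ _ : n ≤ k, V k)
    (fun n => isOpen_iUnion fun k => isOpen_iUnion fun _ => hV k)
    (fun n n' hnn => iUnion_mono fun k => iUnion_mono' fun hk => ⟨hnn.trans hk, subset_rfl⟩)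
    hm0 _ (fun p hp => hp) (baire_lines hV hq hd)
  have hbox : ∀ z ∈ nest ℓ N w 1, |z.1| ≤ 1 / 4 ∧ |z.2| ≤ 1 / 4 := fun z hz => ⟨hz.1, hz.2.1⟩
  refine ⟨nest ℓ N w 1, ?_, hbox, hsub, ?_⟩
  · refine ((isCompact_closedBall (0:ℝ) (1 / 4)).prod
      (isCompact_closedBall (0:ℝ) (1 / 4))).of_isClosed_subset (nest_closed 1) fun z hz => ?_
    exact ⟨by simpa using (hbox z hz).1, by simpa using (hbox z hz).2⟩
  rintro F ⟨K, hK⟩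
  set L : ℝ := K + 1 with hLdef
  have hL : 0 < L := by positivity
  have hF : ∀ a b : ℝ × ℝ, |F a - F b| ≤ L * dist a b := fun a b => by
    have := hK.dist_le_mul a b
    rw [Real.dist_eq] at this
    exact this.trans (by gcongr; linarith)
  set β0 := (2 * L + 1) / (m0 / 8) ^ 2 with hβ0
  have hβ : 0 < β0 := by positivity
  set A := 4 / 3 * β0 with hA
  have hA0 : 0 < A := by positivity
  set C := 240 * √(3 * L + 4 * A) + 32 * (L + 4 * A + 1) with hC
  have hC0 : 0 ≤ C := by positivity
  obtain ⟨Λ, hΛ1, hΛ2⟩ : ∃ Λ, 2 * ((5 * L + 8 * A) * (m0 / 8) + (2 * L + 1)) + 2 * L < Λ ∧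
      2 * (8 * C * √(2 * L + 1) + (3 * L + 4 * A) * (m0 / 8) + (2 * L + 1)) < Λ :=
    ⟨_, (le_max_left _ _).trans_lt (lt_add_one _), (le_max_right _ _).trans_lt (lt_add_one _)⟩
  let p : VP := ⟨F, nest ℓ N w, L, m0, β0, Λ⟩
  have hd0 : p.d0 = m0 / 8 := by
    have h1 : (2 * L + 1) / β0 = (m0 / 8) ^ 2 := by rw [hβ0]; field_simp
    show √((2 * L + 1) / β0) = _
    rw [h1, Real.sqrt_sq (by positivity)]
  have hp : p.Good := ⟨hL, hF, nest_mono hw, nest_closed, hm0, hm1, hβ, by rw [hd0]; exact hΛ1⟩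
  obtain ⟨a, s0, ha, ht⟩ := exists_trip hL.le hF (m := (ℓ 0).1) (by linarith) (ℓ 0).2
    (show (0:ℝ) < 1 / 16 by norm_num)
  have hy : |(ℓ 0).2 + (ℓ 0).1 * a| ≤ 1 / 8 := by
    have h1 : |(ℓ 0).1 * a| ≤ 1 * (1 / 16) := by
      rw [abs_mul]
      exact mul_le_mul (by linarith) ha.le (abs_nonneg _) zero_le_one
    exact (abs_add_le _ _).trans (by linarith)
  have hz0 : (a, (ℓ 0).2 + (ℓ 0).1 * a) ∈ nest ℓ N w 0 := by
    refine ⟨by simpa using ha.le.trans (by norm_num), hy.trans (by norm_num), fun k hk =>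
      ⟨k, le_rfl, by simp, 0, hN0.trans (hN (Nat.zero_le k)), ?_⟩⟩
    simp
  obtain ⟨x, l, m, s, g, hx, hl, hm, hE⟩ := hp.variational (K := C) (δ0 := 1 / 16) hz0 zero_lt_one
    (by show |(ℓ 0).1| ≤ m0; linarith) ht (by norm_num) hC0 (by rw [hd0]; exact hΛ2)
  rw [Prod.dist_eq, Real.dist_eq, Real.dist_eq, max_lt_iff] at hx
  refine ⟨x, nest_mono hw hE.lt_one.le hE.mem,
    hE.differentiableAt hp (nest_wide hm1 hw hw2 hN hℓ hnet) ?_ ?_ hl ?_⟩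
  · have := abs_sub_abs_le_abs_sub x.1 a
    linarith [hx.1]
  · have := abs_sub_abs_le_abs_sub x.2 ((ℓ 0).2 + (ℓ 0).1 * a)
    linarith [hx.2]
  · have := abs_sub_abs_le_abs_sub m (ℓ 0).1
    rw [hd0] at hm
    show |m| ≤ m0 / 2
    linarith

/-! ### Coordinates adapted to the direction `w` -/

/-- The vector `v` turned by a right angle. -/
def rot (v : E2) : E2 := !₂[-v 1, v 0]

lemma inner_eq (u v : E2) : ⟪u, v⟫ = u 0 * v 0 + u 1 * v 1 := by
  simp [PiLp.inner_apply, Fin.sum_univ_two, mul_comm]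

@[simp] lemma rot_zero (v : E2) : rot v 0 = -v 1 := rfl
@[simp] lemma rot_one (v : E2) : rot v 1 = v 0 := rfl

lemma sphere_eq {w : E2} (hw : w ∈ sphere (0:E2) 1) : w 0 * w 0 + w 1 * w 1 = 1 := by
  have h : ‖w‖ = 1 := by simpa using hw
  rw [← inner_eq, real_inner_self_eq_norm_sq, h, one_pow]

/-- The linear part of the coordinates adapted to the direction `w`. -/
def frame (w : E2) : ℝ × ℝ →L[ℝ] E2 :=
  (ContinuousLinearMap.fst ℝ ℝ ℝ).smulRight w + (ContinuousLinearMap.snd ℝ ℝ ℝ).smulRight (rot w)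

/-- The inverse of `frame w`. -/
def coframe (w : E2) : E2 →L[ℝ] ℝ × ℝ := (innerSL ℝ w).prod (innerSL ℝ (rot w))

lemma frame_apply (w : E2) (z : ℝ × ℝ) (i : Fin 2) :
    frame w z i = z.1 * w i + z.2 * rot w i := by
  simp [frame]

lemma coframe_apply (w v : E2) : coframe w v = (⟪w, v⟫, ⟪rot w, v⟫) := rfl

lemma frame_coframe {w : E2} (hw : w ∈ sphere (0:E2) 1) (v : E2) : frame w (coframe w v) = v := by
  have h := sphere_eq hw
  ext i
  rw [frame_apply, coframe_apply, inner_eq, inner_eq]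
  fin_cases i
  · simp only [Fin.zero_eta, rot_zero, rot_one]
    linear_combination v 0 * h
  · simp only [Fin.mk_one, rot_zero, rot_one]
    linear_combination v 1 * h

lemma coframe_frame {w : E2} (hw : w ∈ sphere (0:E2) 1) (z : ℝ × ℝ) : coframe w (frame w z) = z := by
  have h := sphere_eq hw
  rw [coframe_apply, inner_eq, inner_eq]
  simp only [frame_apply, rot_zero, rot_one]
  ext
  · linear_combination z.1 * h
  · linear_combination z.2 * h

/-- Slope and intercept, in the coordinates with origin `c` and axes `w`, `rot w`, of the line
`x + ℝ e`, where `p = (x, e)`. -/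
def slopeIntercept (c w : E2) (p : E2 × E2) : ℝ × ℝ :=
  (⟪rot w, p.2⟫ / ⟪w, p.2⟫,
    ⟪rot w, p.1 - c⟫ - ⟪rot w, p.2⟫ / ⟪w, p.2⟫ * ⟪w, p.1 - c⟫)

lemma slopeIntercept_mem {c w : E2} (hw : w ∈ sphere (0:E2) 1) {x e : E2} (he : ⟪w, e⟫ ≠ 0) (a : ℝ) :
    c + frame w (a, (slopeIntercept c w (x, e)).2 + (slopeIntercept c w (x, e)).1 * a)
      ∈ line x e := by
  refine ⟨(a - ⟪w, x - c⟫) / ⟪w, e⟫, ?_⟩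
  rw [← eq_sub_iff_add_eq', ← frame_coframe hw (x + _ - c)]
  congr 1
  rw [add_sub_right_comm, map_add, map_smul, coframe_apply, coframe_apply]
  simp only [slopeIntercept]
  ext
  · simp only [Prod.fst_add, Prod.smul_fst, smul_eq_mul]
    field_simp
    ring
  · simp only [Prod.snd_add, Prod.smul_snd, smul_eq_mul]
    field_simp
    ring

lemma slopeIntercept_eq {w : E2} (hw : w ∈ sphere (0:E2) 1) (c : E2) (m α : ℝ) {r : ℝ}
    (hr : r ≠ 0) : slopeIntercept c w (c + frame w (0, α), r • frame w (1, m)) = (m, α) := by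
  have h1 := coframe_frame hw (0, α)
  have h2 := coframe_frame hw (1, m)
  rw [coframe_apply, Prod.mk.injEq] at h1 h2
  simp only [slopeIntercept, add_sub_cancel_left, inner_smul_right, h1.1, h1.2, h2.1, h2.2]
  ext
  · simp only; field_simp
  · simp

lemma slopeIntercept_continuousAt (c w : E2) {p : E2 × E2} (hp : ⟪w, p.2⟫ ≠ 0) :
    ContinuousAt (slopeIntercept c w) p := by
  have h1 : Continuous fun p : E2 × E2 => ⟪rot w, p.2⟫ := by fun_prop
  have h2 : Continuous fun p : E2 × E2 => ⟪w, p.2⟫ := by fun_prop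
  have h3 : ContinuousAt (fun p : E2 × E2 => ⟪rot w, p.2⟫ / ⟪w, p.2⟫) p :=
    h1.continuousAt.div h2.continuousAt hp
  have h4 : Continuous fun p : E2 × E2 => ⟪rot w, p.1 - c⟫ := by fun_prop
  have h5 : Continuous fun p : E2 × E2 => ⟪w, p.1 - c⟫ := by fun_prop
  exact h3.prodMk (h4.continuousAt.sub (h3.mul h5.continuousAt))

lemma norm_frame {w : E2} (hw : w ∈ sphere (0:E2) 1) (m : ℝ) :
    ‖frame w (1, m)‖ = √(1 + m ^ 2) := by
  have h := sphere_eq hw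
  rw [norm_eq_sqrt_real_inner, inner_eq]
  simp only [frame_apply, rot_zero, rot_one]
  congr 1
  linear_combination (1 + m ^ 2) * h

lemma frame_mem_cone {w : E2} (hw : w ∈ sphere (0:E2) 1) {m η : ℝ} (hη : η ≤ 1) (hm : |m| < η) :
    (√(1 + m ^ 2))⁻¹ • frame w (1, m) ∈ cone w η := by
  have hpos : 0 < √(1 + m ^ 2) := Real.sqrt_pos.2 (by positivity)
  refine ⟨?_, ?_⟩
  · rw [mem_sphere_zero_iff_norm, norm_smul, norm_frame hw, norm_inv, Real.norm_eq_abs,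
      abs_of_pos hpos, inv_mul_cancel₀ hpos.ne']
  · have h1 := congrArg Prod.fst (coframe_frame hw (1, m))
    rw [coframe_apply] at h1
    simp only at h1
    rw [inner_smul_left, real_inner_comm, h1, mul_one]
    simp only [conj_trivial]
    have h2 : m ^ 2 ≤ η := by
      rw [← sq_abs]
      nlinarith [abs_nonneg m]
    have h3 : √(1 + m ^ 2) ≤ 1 + m ^ 2 := Real.sqrt_le_iff.2
      ⟨by positivity, by nlinarith [sq_nonneg m]⟩
    rw [← one_div, le_div_iff₀ hpos]
    have h4 : (1 - η) * √(1 + m ^ 2) ≤ (1 - η) * (1 + m ^ 2) :=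
      mul_le_mul_of_nonneg_left h3 (by linarith)
    have h5 : (1 - η) * (1 + m ^ 2) ≤ (1 - m ^ 2) * (1 + m ^ 2) :=
      mul_le_mul_of_nonneg_right (by linarith) (by positivity)
    nlinarith [sq_nonneg (m ^ 2)]

/-- Removing finitely many terms does not affect density, since the base points are free. -/
lemma tail_dense {C : Set E2} {f : ℕ → E2 × E2} (hf : univ ×ˢ C ⊆ closure (range f)) (n : ℕ) :
    univ ×ˢ C ⊆ closure (f '' Ici n) := by
  rintro ⟨x, e⟩ ⟨-, he⟩
  rw [_root_.mem_closure_iff]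
  intro O hO hxO
  set v : E2 := !₂[1, 0] with hv
  have hv0 : v ≠ 0 := by
    intro h
    have := congrArg (fun u : E2 => u 0) h
    simp [hv] at this
  set g : ℝ → E2 × E2 := fun t => (x + t • v, e) with hg
  have hinj : Function.Injective g := by
    intro t t' h
    have h1 : x + t • v = x + t' • v := congrArg Prod.fst h
    exact smul_left_injective ℝ hv0 (add_left_cancel h1)
  have hcont : Continuous g := by fun_prop
  have hinf : (g ⁻¹' O).Infinite := infinite_of_mem_nhds 0
    ((hO.preimage hcont).mem_nhds (by simpa [hg] using hxO))
  have hS : (f '' Iio n).Finite := (finite_Iio n).image f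
  obtain ⟨t, ht, ht'⟩ := (hinf.sdiff (hS.preimage hinj.injOn)).nonempty
  obtain ⟨_, ⟨hy, hy'⟩, k, rfl⟩ := _root_.mem_closure_iff.1 (hf (show g t ∈ univ ×ˢ C from ⟨trivial, he⟩))
    (O ∩ (f '' Iio n)ᶜ) (hO.inter hS.isClosed.isOpen_compl) ⟨ht, ht'⟩
  refine ⟨f k, hy, k, ?_, rfl⟩
  by_contra hk
  exact hy' ⟨k, show k < n from lt_of_not_ge hk, rfl⟩

/-- There is `η₀ ∈ (0,1]` such that for every `η ∈ (0,η₀]`: whenever the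
lines `L_k = x_k + ℝ e_k` have directions `e_k ∈ C(w,η)` with `((x_k,e_k))_k` dense in
`ℝ² × C(w,η)`, and `ρ_k > 0`, the set `E = ⋂_n ⋃_{k≥n} B(L_k,ρ_k)` contains a compact
universal differentiability set `D ⊆ E ∩ [0,1]²`. -/
theorem stmt6 :
    ∃ η₀ : ℝ, η₀ ∈ Set.Ioc (0:ℝ) 1 ∧
      ∀ η ∈ Set.Ioc (0:ℝ) η₀, ∀ w ∈ sphere (0:E2) 1,
      ∀ x e : ℕ → E2, (∀ k, e k ∈ cone w η) →
      ∀ ρ : ℕ → ℝ, (∀ k, 0 < ρ k) →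
      Set.univ ×ˢ cone w η ⊆ closure (Set.range fun k => (x k, e k)) →
      ∀ E : Set E2,
        E = (⋂ n : ℕ, ⋃ k, ⋃ _ : n ≤ k, Metric.thickening (ρ k) (line (x k) (e k))) →
      ∃ D : Set E2, IsCompact D ∧ IsUDS D ∧ D ⊆ E ∩ unitSquare := by
  refine ⟨1 / 2, by norm_num, ?_⟩
  rintro η ⟨hη0, hη⟩ w hw x e he ρ hρ hdense E rfl
  set c : E2 := !₂[1 / 2, 1 / 2] with hc
  have hwe : ∀ k, ⟪w, e k⟫ ≠ 0 := fun k => by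
    have := (he k).2
    rw [real_inner_comm] at this
    intro h
    linarith
  set Φ : ℝ × ℝ → E2 := fun z => c + frame w z with hΦ
  have hΦc : Continuous Φ := by fun_prop
  obtain ⟨D, hDc, hDbox, hDE, hD⟩ := planar
    (V := fun k => Φ ⁻¹' Metric.thickening (ρ k) (line (x k) (e k)))
    (q := fun k => slopeIntercept c w (x k, e k)) (m0 := η)
    (fun k => isOpen_thickening.preimage hΦc)
    (fun k a => self_subset_thickening (hρ k) _ (slopeIntercept_mem hw (hwe k) a))
    hη0 (by linarith) (by
      rintro n ⟨m, α⟩ hm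
      have hpos : 0 < √(1 + m ^ 2) := Real.sqrt_pos.2 (by positivity)
      have h1 : (c + frame w (0, α), (√(1 + m ^ 2))⁻¹ • frame w (1, m)) ∈
          closure ((fun k => (x k, e k)) '' Ici n) :=
        tail_dense hdense n ⟨trivial, frame_mem_cone hw (by linarith) hm⟩
      have h2 := congrArg Prod.fst (coframe_frame hw (1, m))
      rw [coframe_apply] at h2
      simp only at h2
      have h3 := mem_closure_image (slopeIntercept_continuousAt c w (by
        rw [inner_smul_right, h2, mul_one]; exact (inv_pos.2 hpos).ne')) h1
      rwa [slopeIntercept_eq hw c m α (inv_pos.2 hpos).ne', image_image] at h3)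
  refine ⟨Φ '' D, hDc.image hΦc, ?_, ?_⟩
  · rintro f ⟨K, hK⟩
    obtain ⟨z, hz, hzd⟩ := hD (fun z => f (Φ z))
      ⟨_, hK.comp ((LipschitzWith.const c).add (frame w).lipschitz)⟩
    refine ⟨Φ z, mem_image_of_mem _ hz, ?_⟩
    have e1 : f = (fun z => f (Φ z)) ∘ fun y => coframe w (y - c) := by
      funext y
      simp [hΦ, frame_coframe hw]
    have e2 : coframe w (Φ z - c) = z := by simp [hΦ, coframe_frame hw]
    rw [e1]
    refine DifferentiableAt.comp _ (by rw [e2]; exact hzd) ?_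
    exact (coframe w).differentiableAt.comp _ (differentiableAt_id.sub_const c)
  · rintro _ ⟨z, hz, rfl⟩
    refine ⟨?_, fun i => ?_⟩
    · simpa using hDE hz
    · have hw2 := sphere_eq hw
      have h0 : |w 0| ≤ 1 := abs_le_one_iff_mul_self_le_one.2 (by nlinarith [mul_self_nonneg (w 1)])
      have h1 : |w 1| ≤ 1 := abs_le_one_iff_mul_self_le_one.2 (by nlinarith [mul_self_nonneg (w 0)])
      have hb : ∀ s t : ℝ, |s| ≤ 1 → |t| ≤ 1 → 1 / 2 + (z.1 * s + z.2 * t) ∈ Set.Icc (0:ℝ) 1 := by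
        intro s t hs ht
        have h2 : |z.1 * s| ≤ 1 / 4 * 1 := by
          rw [abs_mul]; exact mul_le_mul (hDbox z hz).1 hs (abs_nonneg _) (by norm_num)
        have h3 : |z.2 * t| ≤ 1 / 4 * 1 := by
          rw [abs_mul]; exact mul_le_mul (hDbox z hz).2 ht (abs_nonneg _) (by norm_num)
        have h2 := abs_le.1 h2
        have h3 := abs_le.1 h3
        constructor <;> linarith
      have e3 : Φ z i = 1 / 2 + (z.1 * w i + z.2 * rot w i) := by
        rw [← frame_apply]
        fin_cases i <;> simp [hΦ, hc]
      rw [e3]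
      fin_cases i
      · exact hb _ _ h0 (by simpa using h1)
      · exact hb _ _ h1 (by simpa using h0)

end
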